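/- arXiv:math/0411522 — 2 statements merged into one kernel-verified Lean document; each statement's English description precedes it below -/
import Mathlib

section
/- Let n ≥ 2 be an integer and let h, k : S^{n−1} → ℝ be continuous functions on the unit sphere of ℝ^n. Then there exists a function u, continuous on the closed unit ball and smooth on the open unit ball, such that Δ(Δu) = 0 on the open unit ball, u = h on the unit sphere, and Δu extends continuously to the closed unit ball with boundary values equal to k on the unit sphere. -/
/-! The solution is obtained as a uniform limit of polynomial solutions, so that no Poisson kernel and
no integration over the sphere are needed.

For polynomial data the equation `Δu = f` on the unit ball with `u = g` on the sphere has a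
polynomial solution (`exists_dirichlet`): the map `q ↦ Δ((1 - |x|²) q)` on polynomials of bounded
degree is injective by the maximum principle, hence surjective. By Stone-Weierstrass
(`exists_poly_seq`) the data `h`, `k` are uniform limits on the sphere of polynomials `Pⱼ`, `Qⱼ`.
Solving `ΔVⱼ = 0`, `Vⱼ = Qⱼ` and then `ΔUⱼ = Vⱼ`, `Uⱼ = Pⱼ`, the maximum principle shows that both
sequences converge uniformly on the closed ball (`ucauchy_of_boundary`); the limits `u`, `v` are
continuous there and have boundary values `h`, `k`.

Interior regularity rests on Bernstein's trick (`bernstein`). If `Δ²p = 0`, `φ = r² - |x|²` and `A`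
is a large constant, then `Δ((φ ∂ᵢp)² + A p²)` is bounded below in terms of `sup |p|` and
`sup |Δp|`, and the maximum principle bounds `∂ᵢp` on smaller balls by these suprema; the same holds
for `∂ᵢΔp`. Hence locally uniform convergence of a sequence of biharmonic polynomials and of its
Laplacians passes to all partial derivatives (`BiharmSeq.pderiv`), so the limit is smooth and may be
differentiated term by term: `Δu = lim ΔUⱼ = v` and `Δv = lim ΔVⱼ = 0`. -/

/-- The Euclidean Laplacian on `ℝ^n`: the trace of the Hessian, computed as the sum of the
second derivatives in the coordinate directions. -/
noncomputable def laplacian {n : ℕ} (f : EuclideanSpace ℝ (Fin n) → ℝ)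
    (x : EuclideanSpace ℝ (Fin n)) : ℝ :=
  ∑ i : Fin n,
    iteratedFDeriv ℝ 2 f x ![EuclideanSpace.single i 1, EuclideanSpace.single i 1]

/-- `P : ℝ^n → ℝ` is a homogeneous harmonic polynomial of degree `γ`: it is a polynomial
function, homogeneous of degree `γ` (`P (t • x) = t ^ γ * P x`), and harmonic (`Δ P = 0`). -/
def IsHomHarmonicPoly (n γ : ℕ) (P : EuclideanSpace ℝ (Fin n) → ℝ) : Prop :=
  (∃ p : MvPolynomial (Fin n) ℝ, ∀ x, P x = MvPolynomial.eval (fun i => x i) p) ∧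
  (∀ (t : ℝ) (x : EuclideanSpace ℝ (Fin n)), P (t • x) = t ^ γ * P x) ∧
  (∀ x, laplacian P x = 0)

namespace Biharm

open MvPolynomial Filter Topology

variable {n : ℕ}

/-! ### Polynomial functions and their Laplacians -/

/-- The value of a polynomial in `n` variables at a point of `EuclideanSpace ℝ (Fin n)`. -/
noncomputable def ev (p : MvPolynomial (Fin n) ℝ) (x : EuclideanSpace ℝ (Fin n)) : ℝ :=
  eval x.ofLp p

/-- The linear form on `ℝ^n` with a given coefficient vector, as a linear function of that
vector. -/
noncomputable def linForm : (Fin n → ℝ) →L[ℝ] EuclideanSpace ℝ (Fin n) →L[ℝ] ℝ :=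
  ∑ i, (ContinuousLinearMap.proj i : (Fin n → ℝ) →L[ℝ] ℝ).smulRight
    (EuclideanSpace.proj i : EuclideanSpace ℝ (Fin n) →L[ℝ] ℝ)

/-- The formal Laplacian of a polynomial. -/
noncomputable def Lap : MvPolynomial (Fin n) ℝ →ₗ[ℝ] MvPolynomial (Fin n) ℝ :=
  ∑ i, (pderiv i).toLinearMap ∘ₗ (pderiv i).toLinearMap

variable (n) in
/-- The polynomial `|x|²`. -/
noncomputable def nsq : MvPolynomial (Fin n) ℝ := ∑ i, X i ^ 2

lemma linForm_apply (c : Fin n → ℝ) (y : EuclideanSpace ℝ (Fin n)) :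
    linForm c y = ∑ i, c i * y i := by
  simp [linForm]

lemma linForm_single (c : Fin n → ℝ) (i : Fin n) :
    linForm c (EuclideanSpace.single i 1) = c i := by
  simp [linForm_apply]

lemma Lap_apply (p : MvPolynomial (Fin n) ℝ) : Lap p = ∑ i, pderiv i (pderiv i p) := by
  simp [Lap, LinearMap.sum_apply]

section ev

variable (p q : MvPolynomial (Fin n) ℝ) (x : EuclideanSpace ℝ (Fin n))

lemma ev_zero : ev (0 : MvPolynomial (Fin n) ℝ) x = 0 := by simp [ev]
lemma ev_add : ev (p + q) x = ev p x + ev q x := by simp [ev]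
lemma ev_sub : ev (p - q) x = ev p x - ev q x := by simp [ev]
lemma ev_neg : ev (-p) x = -ev p x := by simp [ev]
lemma ev_mul : ev (p * q) x = ev p x * ev q x := by simp [ev]
lemma ev_smul (a : ℝ) : ev (a • p) x = a * ev p x := by simp [ev]
lemma ev_C (a : ℝ) : ev (C a : MvPolynomial (Fin n) ℝ) x = a := by simp [ev]
lemma ev_X (i : Fin n) : ev (X i) x = x i := by simp [ev]
lemma ev_sum (f : Fin n → MvPolynomial (Fin n) ℝ) : ev (∑ i, f i) x = ∑ i, ev (f i) x := by
  simp [ev]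
lemma ev_nsq : ev (nsq n) x = ‖x‖ ^ 2 := by
  simp [nsq, ev, EuclideanSpace.norm_sq_eq]
lemma ev_Lap : ev (Lap p) x = ∑ i, ev (pderiv i (pderiv i p)) x := by
  rw [Lap_apply, ev_sum]

end ev

lemma continuous_ev (p : MvPolynomial (Fin n) ℝ) : Continuous (ev p) :=
  (MvPolynomial.continuous_eval p).comp (PiLp.continuous_ofLp 2 _)

lemma hasFDerivAt_ev (p : MvPolynomial (Fin n) ℝ) (x : EuclideanSpace ℝ (Fin n)) :
    HasFDerivAt (ev p) (linForm fun i => ev (pderiv i p) x) x := by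
  classical
  induction p using MvPolynomial.induction_on with
  | C a =>
    have h1 : linForm (fun i => ev (pderiv i (C a : MvPolynomial (Fin n) ℝ)) x) = 0 := by
      have h0 : (fun i => ev (pderiv i (C a : MvPolynomial (Fin n) ℝ)) x) = 0 := by
        funext i
        rw [pderiv_C, ev_zero, Pi.zero_apply]
      rw [h0, map_zero]
    have h2 : ev (C a : MvPolynomial (Fin n) ℝ) = fun _ => a := by
      funext y
      rw [ev_C]
    rw [h1, h2]
    exact hasFDerivAt_const a x
  | add p q hp hq =>
    have h1 : linForm (fun i => ev (pderiv i (p + q)) x) =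
        linForm (fun i => ev (pderiv i p) x) + linForm (fun i => ev (pderiv i q) x) := by
      rw [← map_add]
      congr 1
      ext i
      simp [ev_add]
    have h2 : ev (p + q) = fun y => ev p y + ev q y := _root_.funext fun y => ev_add p q y
    rw [h1, h2]
    exact hp.add hq
  | mul_X p j hp =>
    have h0 : HasFDerivAt (fun x : EuclideanSpace ℝ (Fin n) => x j)
        (EuclideanSpace.proj j : EuclideanSpace ℝ (Fin n) →L[ℝ] ℝ) x :=
      (EuclideanSpace.proj j : EuclideanSpace ℝ (Fin n) →L[ℝ] ℝ).hasFDerivAt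
    have h1 : linForm (fun i => ev (pderiv i (p * X j)) x) =
        ev p x • (EuclideanSpace.proj j : EuclideanSpace ℝ (Fin n) →L[ℝ] ℝ) +
        x j • linForm (fun i => ev (pderiv i p) x) := by
      ext y
      have : ∀ i, ev (pderiv i (p * X j)) x * y i
          = (if i = j then ev p x * y i else 0) + x j * (ev (pderiv i p) x * y i) := fun i => by
        rw [pderiv_mul, ev_add, ev_mul, ev_mul, ev_X, pderiv_X]
        by_cases hij : i = j
        · subst hij; simp [ev]; ring
        · simp [hij, ev, Ne.symm hij]; ring
      rw [linForm_apply, Finset.sum_congr rfl fun i _ => this i]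
      simp [linForm_apply, Finset.sum_add_distrib, Finset.mul_sum]
    have h2 : ev (p * X j) = fun y => ev p y * y j := _root_.funext fun y => by rw [ev_mul, ev_X]
    rw [h1, h2]
    exact hp.mul h0

/-- The Laplacian read off from first-order expansions of the function and its partials. -/
lemma laplacian_eq {f : EuclideanSpace ℝ (Fin n) → ℝ} {g : Fin n → EuclideanSpace ℝ (Fin n) → ℝ}
    {H : Fin n → Fin n → ℝ} {x : EuclideanSpace ℝ (Fin n)}
    (hf : ∀ᶠ y in 𝓝 x, HasFDerivAt f (linForm fun i => g i y) y)
    (hg : ∀ i, HasFDerivAt (g i) (linForm (H i)) x) :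
    laplacian f x = ∑ i, H i i := by
  have h1 : fderiv ℝ f =ᶠ[𝓝 x] fun y => linForm fun i => g i y := by
    filter_upwards [hf] with y hy
    exact hy.fderiv
  have h2 : HasFDerivAt (fun y => linForm fun i => g i y)
      (linForm.comp (ContinuousLinearMap.pi fun i => linForm (H i))) x :=
    linForm.hasFDerivAt.comp x (hasFDerivAt_pi.2 hg)
  unfold laplacian
  refine Finset.sum_congr rfl fun j _ => ?_
  rw [iteratedFDeriv_two_apply, h1.fderiv_eq, h2.fderiv]
  simp [linForm_single]

/-! ### Maximum principle -/

/-- Second derivative test along a coordinate line: a positive second derivative would make the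
point a local minimum as well, so the restriction would be locally constant. -/
lemma pderiv_pderiv_nonpos_of_isLocalMax {p : MvPolynomial (Fin n) ℝ}
    {x : EuclideanSpace ℝ (Fin n)} (h : IsLocalMax (ev p) x) (i : Fin n) :
    ev (pderiv i (pderiv i p)) x ≤ 0 := by
  set l : ℝ → EuclideanSpace ℝ (Fin n) := fun t => x + t • EuclideanSpace.single i 1 with hl
  have hl' : ∀ t, HasDerivAt l (EuclideanSpace.single i 1) t := fun t => by
    have := ((hasDerivAt_id t).smul_const (EuclideanSpace.single i (1 : ℝ))).const_add x
    rwa [one_smul] at this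
  have hd : ∀ (q : MvPolynomial (Fin n) ℝ) t,
      HasDerivAt (fun t => ev q (l t)) (ev (pderiv i q) (l t)) t := fun q t => by
    have := (hasFDerivAt_ev q (l t)).comp_hasDerivAt t (hl' t)
    rwa [linForm_single] at this
  have hd1 : ∀ q : MvPolynomial (Fin n) ℝ,
      deriv (fun t => ev q (l t)) = fun t => ev (pderiv i q) (l t) :=
    fun q => _root_.funext fun t => (hd q t).deriv
  have hl0 : l 0 = x := by simp [hl]
  have hmax : IsLocalMax (fun t => ev p (l t)) 0 := by
    have : Tendsto l (𝓝 0) (𝓝 x) := by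
      have := (hl' 0).continuousAt.tendsto
      rwa [hl0] at this
    have h3 := this.eventually h
    filter_upwards [h3] with t ht
    simpa [hl0] using ht
  by_contra! hpos
  have hmin : IsLocalMin (fun t => ev p (l t)) 0 := by
    refine isLocalMin_of_deriv_deriv_pos ?_ hmax.deriv_eq_zero (hd p 0).continuousAt
    rw [hd1, hd1]
    simpa only [hl0] using hpos
  have hconst : (fun t => ev p (l t)) =ᶠ[𝓝 0] fun _ => ev p (l 0) := by
    filter_upwards [hmax, hmin] with t h1 h2 using le_antisymm h1 h2
  have : deriv (deriv fun t => ev p (l t)) 0 = 0 := by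
    rw [(hconst.deriv).deriv_eq]
    simp
  rw [hd1, hd1] at this
  simp only [hl0] at this
  exact hpos.ne' this

lemma max_principle_strict {p : MvPolynomial (Fin n) ℝ} {r M : ℝ}
    (hp : ∀ x : EuclideanSpace ℝ (Fin n), ‖x‖ < r → 0 < ev (Lap p) x)
    (hM : ∀ x : EuclideanSpace ℝ (Fin n), ‖x‖ = r → ev p x ≤ M)
    (x : EuclideanSpace ℝ (Fin n)) (hx : ‖x‖ ≤ r) : ev p x ≤ M := by
  obtain ⟨z, hz, hmax⟩ := (isCompact_closedBall (0 : EuclideanSpace ℝ (Fin n)) r).exists_isMaxOn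
    ⟨x, by simpa using hx⟩ (continuous_ev p).continuousOn
  have hxz : ev p x ≤ ev p z := hmax (by simpa using hx)
  have hz' : ‖z‖ ≤ r := by simpa using hz
  rcases hz'.lt_or_eq with h | h
  · have hloc : IsLocalMax (ev p) z :=
      hmax.isLocalMax (mem_of_superset (Metric.isOpen_ball.mem_nhds (by simpa using h))
        Metric.ball_subset_closedBall)
    have h1 := hp z h
    have h2 : ev (Lap p) z ≤ 0 := by
      rw [ev_Lap]
      exact Finset.sum_nonpos fun i _ => pderiv_pderiv_nonpos_of_isLocalMax hloc i
    exact absurd h1 h2.not_gt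
  · exact hxz.trans (hM z h)

lemma pderiv_nsq (i : Fin n) : pderiv i (nsq n) = 2 * X i := by
  classical
  simp [nsq, pderiv_X, Pi.single_apply]

lemma Lap_nsq : Lap (nsq n) = C (2 * n : ℝ) := by
  simp only [Lap_apply, pderiv_nsq]
  have h2 : (2 : MvPolynomial (Fin n) ℝ) = C 2 := (map_ofNat C 2).symm
  have : ∀ i : Fin n, pderiv i (2 * X i : MvPolynomial (Fin n) ℝ) = C 2 := fun i => by
    rw [h2, pderiv_C_mul]; simp
  rw [Finset.sum_congr rfl fun i _ => this i]
  simp [mul_comm]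

/-- A polynomial with `Δp ≥ -K` on a ball of radius at most one exceeds its boundary maximum
by at most `K`. -/
lemma max_principle (hn : 1 ≤ n) {p : MvPolynomial (Fin n) ℝ} {r M K : ℝ} (hr0 : 0 ≤ r)
    (hr : r ≤ 1) (hK : 0 ≤ K)
    (hp : ∀ x : EuclideanSpace ℝ (Fin n), ‖x‖ ≤ r → -K ≤ ev (Lap p) x)
    (hM : ∀ x : EuclideanSpace ℝ (Fin n), ‖x‖ = r → ev p x ≤ M)
    (x : EuclideanSpace ℝ (Fin n)) (hx : ‖x‖ ≤ r) : ev p x ≤ M + K := by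
  refine le_of_forall_pos_le_add fun ε hε => ?_
  have hn' : (1 : ℝ) ≤ n := by exact_mod_cast hn
  have key := max_principle_strict (p := p + C (K + ε) * nsq n) (r := r) (M := M + (K + ε))
    (fun y hy => ?_) (fun y hy => ?_) x hx
  · have : 0 ≤ (K + ε) * ‖x‖ ^ 2 := by positivity
    rw [ev_add, ev_mul, ev_C, ev_nsq] at key
    linarith
  · have h1 := hp y hy.le
    rw [map_add, ← smul_eq_C_mul, map_smul, Lap_nsq]
    rw [ev_add, ev_smul, ev_C]
    nlinarith
  · have h1 := hM y hy
    rw [ev_add, ev_mul, ev_C, ev_nsq, hy]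
    have : r ^ 2 ≤ 1 := by nlinarith
    nlinarith

/-- Two-sided form of the maximum principle: `|p| ≤ max_{∂B} |p| + max_B |Δp|`. -/
lemma abs_le_of_boundary (hn : 1 ≤ n) {p : MvPolynomial (Fin n) ℝ} {M K : ℝ} (hK : 0 ≤ K)
    (hp : ∀ x : EuclideanSpace ℝ (Fin n), ‖x‖ ≤ 1 → |ev (Lap p) x| ≤ K)
    (hM : ∀ x : EuclideanSpace ℝ (Fin n), ‖x‖ = 1 → |ev p x| ≤ M)
    (x : EuclideanSpace ℝ (Fin n)) (hx : ‖x‖ ≤ 1) : |ev p x| ≤ M + K := by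
  rw [abs_le']
  refine ⟨max_principle hn zero_le_one le_rfl hK (fun y hy => (abs_le.1 (hp y hy)).1)
    (fun y hy => (le_abs_self _).trans (hM y hy)) x hx, ?_⟩
  have := max_principle (p := -p) (M := M) hn zero_le_one le_rfl hK
    (fun y hy => ?_) (fun y hy => ?_) x hx
  · rwa [ev_neg] at this
  · have := (abs_le.1 (hp y hy)).2
    rw [map_neg, ev_neg]
    linarith
  · have := (abs_le.1 (hM y hy)).1
    rw [ev_neg]
    linarith

/-! ### The Dirichlet problem for polynomials -/

lemma eq_zero_of_ball {p : MvPolynomial (Fin n) ℝ}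
    (h : ∀ x : EuclideanSpace ℝ (Fin n), ‖x‖ < 1 → ev p x = 0) : p = 0 := by
  rcases Nat.eq_zero_or_pos n with rfl | hn
  · refine MvPolynomial.funext fun x => ?_
    simpa [ev] using h (WithLp.toLp 2 x) (by simp [EuclideanSpace.norm_eq])
  have hn' : (1 : ℝ) ≤ n := by exact_mod_cast hn
  refine MvPolynomial.funext_set (fun _ => Set.Ioo (0 : ℝ) (1 / n))
    (fun _ => Set.Ioo_infinite (by positivity)) fun x hx => ?_
  rw [map_zero]
  refine h (WithLp.toLp 2 x) ?_
  have h1 : ‖(WithLp.toLp 2 x : EuclideanSpace ℝ (Fin n))‖ ^ 2 < 1 := by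
    rw [EuclideanSpace.norm_sq_eq]
    calc ∑ i, ‖x i‖ ^ 2 < ∑ i : Fin n, (1 / n : ℝ) := by
          refine Finset.sum_lt_sum_of_nonempty ⟨⟨0, hn⟩, Finset.mem_univ _⟩ fun i _ => ?_
          obtain ⟨ha, hb⟩ := hx i (Set.mem_univ i)
          have : (1 / n : ℝ) ≤ 1 := by rw [div_le_one (by linarith)]; exact hn'
          rw [Real.norm_eq_abs, sq_abs]
          nlinarith
      _ = 1 := by simp; field_simp
  nlinarith [norm_nonneg (WithLp.toLp 2 x : EuclideanSpace ℝ (Fin n))]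

lemma totalDegree_pderiv_le {p : MvPolynomial (Fin n) ℝ} {m : ℕ} (i : Fin n)
    (hp : p.totalDegree ≤ m + 1) : (pderiv i p).totalDegree ≤ m := by
  refine Finset.sup_le fun s hs => ?_
  rw [mem_support_iff, coeff_pderiv] at hs
  have h1 := (le_totalDegree (mem_support_iff.2 (left_ne_zero_of_mul hs))).trans hp
  rw [Finsupp.sum_add_index' (fun _ => rfl) (fun _ _ _ => rfl),
    Finsupp.sum_single_index rfl] at h1
  omega

lemma totalDegree_Lap_le {p : MvPolynomial (Fin n) ℝ} {m : ℕ}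
    (hp : p.totalDegree ≤ m + 2) : (Lap p).totalDegree ≤ m := by
  rw [Lap_apply]
  exact totalDegree_finsetSum_le fun i _ =>
    totalDegree_pderiv_le i (totalDegree_pderiv_le i hp)

lemma totalDegree_one_sub_nsq_mul_le {q : MvPolynomial (Fin n) ℝ} {m : ℕ}
    (hq : q.totalDegree ≤ m) : ((1 - nsq n) * q).totalDegree ≤ m + 2 := by
  have h1 : (nsq n).totalDegree ≤ 2 := totalDegree_finsetSum_le fun i _ => by
    rw [totalDegree_X_pow]
  have h2 : (1 - nsq n).totalDegree ≤ 2 := (totalDegree_sub _ _).trans (by simpa using h1)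
  have h3 := totalDegree_mul (1 - nsq n) q
  omega

/-- The map `q ↦ Δ((1 - |x|²) q)` preserves the finite-dimensional space of polynomials of degree
at most `m` and is injective by the maximum principle, hence it is onto. -/
lemma exists_Lap_eq (hn : 1 ≤ n) (f : MvPolynomial (Fin n) ℝ) :
    ∃ q, Lap ((1 - nsq n) * q) = f := by
  let T : restrictTotalDegree (Fin n) ℝ f.totalDegree →ₗ[ℝ]
      restrictTotalDegree (Fin n) ℝ f.totalDegree :=
    (Lap ∘ₗ LinearMap.mulLeft ℝ (1 - nsq n)).restrict fun q hq => by
      rw [mem_restrictTotalDegree] at hq ⊢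
      exact totalDegree_Lap_le (totalDegree_one_sub_nsq_mul_le hq)
  have hT : ∀ q, ((T q : restrictTotalDegree (Fin n) ℝ f.totalDegree) :
      MvPolynomial (Fin n) ℝ) = Lap ((1 - nsq n) * (q : MvPolynomial (Fin n) ℝ)) := fun q => rfl
  have hinj : Function.Injective T := by
    rw [← LinearMap.ker_eq_bot, LinearMap.ker_eq_bot']
    intro q hq
    have h0 : Lap ((1 - nsq n) * (q : MvPolynomial (Fin n) ℝ)) = 0 := by
      rw [← hT, hq]; rfl
    have hev : ∀ x : EuclideanSpace ℝ (Fin n), ev ((1 - nsq n) * (q : MvPolynomial (Fin n) ℝ)) x =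
        (1 - ‖x‖ ^ 2) * ev (q : MvPolynomial (Fin n) ℝ) x := fun x => by
      rw [ev_mul, ev_sub, ev_nsq, ← C_1, ev_C]
    refine Subtype.ext (eq_zero_of_ball fun x hx => ?_)
    have h1 := abs_le_of_boundary (M := 0) (K := 0) hn le_rfl
      (p := (1 - nsq n) * (q : MvPolynomial (Fin n) ℝ))
      (fun y _ => by rw [h0, ev_zero, abs_zero])
      (fun y hy => by rw [hev, hy]; simp) x hx.le
    rw [add_zero, abs_nonpos_iff, hev] at h1
    refine (mul_eq_zero.1 h1).resolve_left ?_
    nlinarith [norm_nonneg x]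
  obtain ⟨q, hq⟩ := (LinearMap.injective_iff_surjective.1 hinj)
    ⟨f, (mem_restrictTotalDegree _ _ _).2 le_rfl⟩
  exact ⟨q, by rw [← hT, hq]⟩

/-- The Poisson equation on the unit ball with polynomial data has a polynomial solution. -/
lemma exists_dirichlet (hn : 1 ≤ n) (g f : MvPolynomial (Fin n) ℝ) :
    ∃ u, Lap u = f ∧ ∀ x : EuclideanSpace ℝ (Fin n), ‖x‖ = 1 → ev u x = ev g x := by
  obtain ⟨q, hq⟩ := exists_Lap_eq hn (Lap g - f)
  refine ⟨g - (1 - nsq n) * q, by rw [map_sub, hq]; abel, fun x hx => ?_⟩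
  rw [ev_sub, ev_mul, ev_sub, ev_nsq, ← C_1, ev_C, hx]
  ring

/-! ### Interior derivative estimates -/

lemma pderiv_pderiv_comm (i j : Fin n) (p : MvPolynomial (Fin n) ℝ) :
    pderiv i (pderiv j p) = pderiv j (pderiv i p) := by
  rcases eq_or_ne i j with rfl | hij
  · rfl
  ext m
  simp only [coeff_pderiv, Finsupp.add_apply, Finsupp.single_eq_of_ne hij,
    Finsupp.single_eq_of_ne hij.symm, add_zero]
  rw [add_right_comm, mul_right_comm]

lemma Lap_pderiv (i : Fin n) (p : MvPolynomial (Fin n) ℝ) :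
    Lap (pderiv i p) = pderiv i (Lap p) := by
  rw [Lap_apply, Lap_apply, map_sum]
  refine Finset.sum_congr rfl fun j _ => ?_
  rw [pderiv_pderiv_comm j i, pderiv_pderiv_comm j i]

lemma ev_Lap_mul (a b : MvPolynomial (Fin n) ℝ) (x : EuclideanSpace ℝ (Fin n)) :
    ev (Lap (a * b)) x = ev (Lap a) x * ev b x + ev a x * ev (Lap b) x +
      2 * ∑ k, ev (pderiv k a) x * ev (pderiv k b) x := by
  simp only [ev_Lap, Finset.sum_mul, Finset.mul_sum, ← Finset.sum_add_distrib]
  refine Finset.sum_congr rfl fun k _ => ?_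
  simp only [pderiv_mul, map_add, ev_add, ev_mul]
  ring

/-- The lower bound behind Bernstein's gradient estimate: with the cut-off
`φ = r² - |x|²`, the function `(φ ∂ᵢp)² + A p²` is almost subharmonic once `A` is large. -/
lemma bernstein_lower {p : MvPolynomial (Fin n) ℝ} {r : ℝ} (hr0 : 0 ≤ r) (hr : r ≤ 1)
    (i : Fin n) (x : EuclideanSpace ℝ (Fin n)) (hx : ‖x‖ ≤ r) :
    -((r ^ 2 - ‖x‖ ^ 2) * ev (pderiv i (Lap p)) x) ^ 2
        + (25 + 4 * n) * (ev p x * ev (Lap p) x) ≤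
      ev (Lap (((C (r ^ 2) - nsq n) * pderiv i p) * ((C (r ^ 2) - nsq n) * pderiv i p)
        + C ((25 + 4 * n) / 2 : ℝ) * (p * p))) x := by
  set w := pderiv i p with hw
  set φ : ℝ := r ^ 2 - ‖x‖ ^ 2 with hφ
  have hφ0 : 0 ≤ φ := by rw [hφ]; nlinarith [norm_nonneg x]
  have hS : ‖x‖ ^ 2 ≤ 1 := by nlinarith [norm_nonneg x]
  have hφ1 : φ ≤ 1 := by rw [hφ]; nlinarith [norm_nonneg x]
  have evφ : ev (C (r ^ 2) - nsq n) x = φ := by rw [ev_sub, ev_C, ev_nsq]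
  have dφ : ∀ k, ev (pderiv k (C (r ^ 2) - nsq n)) x = -(2 * x k) := fun k => by
    have h2 : (2 : MvPolynomial (Fin n) ℝ) = C 2 := (map_ofNat C 2).symm
    rw [map_sub, pderiv_C, pderiv_nsq, h2, ev_sub, ev_zero, ev_mul, ev_C, ev_X]; ring
  have Lφ : ev (Lap (C (r ^ 2) - nsq n)) x = -(2 * n) := by
    have : Lap (C (r ^ 2) : MvPolynomial (Fin n) ℝ) = 0 := by simp [Lap_apply]
    rw [map_sub, this, Lap_nsq, ev_sub, ev_zero, ev_C]; ring
  have dz : ∀ k, ev (pderiv k ((C (r ^ 2) - nsq n) * w)) x =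
      φ * ev (pderiv k w) x - 2 * x k * ev w x := fun k => by
    rw [pderiv_mul, ev_add, ev_mul, ev_mul, dφ, evφ]; ring
  set D := ∑ k, x k * ev (pderiv k w) x with hD
  set G := ∑ k, ev (pderiv k w) x ^ 2 with hG
  have hSs : ‖x‖ ^ 2 = ∑ k, x k ^ 2 := by simp [EuclideanSpace.norm_sq_eq]
  have Lz : ev (Lap ((C (r ^ 2) - nsq n) * w)) x =
      φ * ev (pderiv i (Lap p)) x - 2 * n * ev w x - 4 * D := by
    rw [ev_Lap_mul, Lφ, evφ, hw, Lap_pderiv]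
    simp only [dφ, hD, Finset.mul_sum]
    rw [add_comm, ← sub_eq_zero]
    have : ∑ k, 2 * (-(2 * x k) * ev (pderiv k (pderiv i p)) x) =
        -∑ k, 4 * (x k * ev (pderiv k (pderiv i p)) x) := by
      rw [← Finset.sum_neg_distrib]
      exact Finset.sum_congr rfl fun k _ => by ring
    rw [this]; ring
  have sq1 : ∀ c : ℝ, ∑ k, (φ * ev (pderiv k w) x - c * x k * ev w x) ^ 2 =
      φ ^ 2 * G - 2 * c * φ * ev w x * D + c ^ 2 * ‖x‖ ^ 2 * ev w x ^ 2 := fun c => by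
    rw [hG, hD, hSs]
    simp only [Finset.mul_sum, Finset.sum_mul, ← Finset.sum_add_distrib, ← Finset.sum_sub_distrib]
    exact Finset.sum_congr rfl fun k _ => by ring
  have sq4 : 0 ≤ φ ^ 2 * G - 8 * φ * ev w x * D + 16 * ‖x‖ ^ 2 * ev w x ^ 2 := by
    have h := Finset.sum_nonneg fun k (_ : k ∈ Finset.univ) =>
      sq_nonneg (φ * ev (pderiv k w) x - 4 * x k * ev w x)
    rw [sq1] at h
    linarith
  have hgrad : ev w x ^ 2 ≤ ∑ k, ev (pderiv k p) x * ev (pderiv k p) x := by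
    rw [hw, sq]
    exact Finset.single_le_sum (f := fun k => ev (pderiv k p) x * ev (pderiv k p) x)
      (fun k _ => mul_self_nonneg _) (Finset.mem_univ i)
  have Lpp : ev (Lap (C ((25 + 4 * n) / 2 : ℝ) * (p * p))) x =
      (25 + 4 * n) * (ev p x * ev (Lap p) x) +
      (25 + 4 * n) * ∑ k, ev (pderiv k p) x * ev (pderiv k p) x := by
    rw [← smul_eq_C_mul, map_smul, ev_smul, ev_Lap_mul]; ring
  rw [map_add, ev_add, Lpp, ev_Lap_mul, Lz, ev_mul, evφ]
  have : ∑ k, ev (pderiv k ((C (r ^ 2) - nsq n) * w)) x * ev (pderiv k ((C (r ^ 2) - nsq n) * w)) x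
      = φ ^ 2 * G - 4 * φ * ev w x * D + 4 * ‖x‖ ^ 2 * ev w x ^ 2 := by
    simp only [dz, ← sq]
    rw [sq1]; ring
  rw [this]
  have hn0 : (0 : ℝ) ≤ n := Nat.cast_nonneg n
  have e1 := mul_le_mul_of_nonneg_left hgrad (by positivity : (0 : ℝ) ≤ 25 + 4 * n)
  have e2 : φ * (n * ev w x ^ 2) ≤ 1 * (n * ev w x ^ 2) :=
    mul_le_mul_of_nonneg_right hφ1 (by positivity)
  have e3 : ‖x‖ ^ 2 * ev w x ^ 2 ≤ 1 * ev w x ^ 2 :=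
    mul_le_mul_of_nonneg_right hS (sq_nonneg _)
  have e4 : φ ^ 2 * ev w x ^ 2 ≤ 1 * ev w x ^ 2 :=
    mul_le_mul_of_nonneg_right (by nlinarith) (sq_nonneg _)
  have e5 := sq_nonneg (φ * ev w x + φ * ev (pderiv i (Lap p)) x)
  nlinarith

/-- One step of Bernstein's estimate, with an inhomogeneous term controlled by `b`. -/
lemma bernstein_step {p : MvPolynomial (Fin n) ℝ} {r a b : ℝ} (hr0 : 0 ≤ r) (hr : r ≤ 1)
    (hb : 0 ≤ b) (i : Fin n)
    (hp : ∀ x : EuclideanSpace ℝ (Fin n), ‖x‖ ≤ r → |ev p x| ≤ a)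
    (hL : ∀ x : EuclideanSpace ℝ (Fin n), ‖x‖ ≤ r → |ev (Lap p) x| ≤ a)
    (hd : ∀ x : EuclideanSpace ℝ (Fin n), ‖x‖ ≤ r →
      ((r ^ 2 - ‖x‖ ^ 2) * ev (pderiv i (Lap p)) x) ^ 2 ≤ b)
    (x : EuclideanSpace ℝ (Fin n)) (hx : ‖x‖ ≤ r) :
    ((r ^ 2 - ‖x‖ ^ 2) * ev (pderiv i p) x) ^ 2 ≤ 3 / 2 * (25 + 4 * n) * a ^ 2 + b := by
  have hn : 1 ≤ n := i.pos
  have ha : 0 ≤ a := (abs_nonneg _).trans (hp x hx)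
  have hev : ∀ y : EuclideanSpace ℝ (Fin n),
      ev (((C (r ^ 2) - nsq n) * pderiv i p) * ((C (r ^ 2) - nsq n) * pderiv i p)
        + C ((25 + 4 * n) / 2 : ℝ) * (p * p)) y =
      ((r ^ 2 - ‖y‖ ^ 2) * ev (pderiv i p) y) ^ 2 + (25 + 4 * n) / 2 * ev p y ^ 2 := fun y => by
    simp only [ev_add, ev_mul, ev_sub, ev_C, ev_nsq]; ring
  have hpsq : ∀ y : EuclideanSpace ℝ (Fin n), ‖y‖ ≤ r → ev p y ^ 2 ≤ a ^ 2 := fun y hy => by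
    rw [← sq_abs]; exact pow_le_pow_left₀ (abs_nonneg _) (hp y hy) 2
  have key := max_principle hn hr0 hr (M := (25 + 4 * n) / 2 * a ^ 2)
    (K := b + (25 + 4 * n) * a ^ 2) (by positivity)
    (p := ((C (r ^ 2) - nsq n) * pderiv i p) * ((C (r ^ 2) - nsq n) * pderiv i p)
        + C ((25 + 4 * n) / 2 : ℝ) * (p * p)) (fun y hy => ?_) (fun y hy => ?_) x hx
  · rw [hev] at key
    have : 0 ≤ (25 + 4 * n) / 2 * ev p x ^ 2 := by positivity
    linarith
  · refine le_trans ?_ (bernstein_lower hr0 hr i y hy)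
    have h1 := hd y hy
    have h2 : -(a ^ 2) ≤ ev p y * ev (Lap p) y := by
      have : |ev p y * ev (Lap p) y| ≤ a * a := by
        rw [abs_mul]; exact mul_le_mul (hp y hy) (hL y hy) (abs_nonneg _) ha
      have := (abs_le.1 this).1
      linarith
    have h3 := mul_le_mul_of_nonneg_left h2 (by positivity : (0 : ℝ) ≤ 25 + 4 * n)
    linarith
  · rw [hev, hy]
    have := mul_le_mul_of_nonneg_left (hpsq y hy.le) (by positivity : (0 : ℝ) ≤ (25 + 4 * n) / 2)
    simpa using this

/-- Interior estimate for the first derivatives of a biharmonic polynomial and of its Laplacian. -/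
lemma bernstein {p : MvPolynomial (Fin n) ℝ} {r a : ℝ} (hr0 : 0 ≤ r) (hr : r ≤ 1)
    (i : Fin n) (h2 : Lap (Lap p) = 0)
    (hp : ∀ x : EuclideanSpace ℝ (Fin n), ‖x‖ ≤ r → |ev p x| ≤ a)
    (hL : ∀ x : EuclideanSpace ℝ (Fin n), ‖x‖ ≤ r → |ev (Lap p) x| ≤ a)
    (x : EuclideanSpace ℝ (Fin n)) (hx : ‖x‖ ≤ r) :
    ((r ^ 2 - ‖x‖ ^ 2) * ev (pderiv i p) x) ^ 2 ≤ 3 * (25 + 4 * n) * a ^ 2 ∧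
    ((r ^ 2 - ‖x‖ ^ 2) * ev (pderiv i (Lap p)) x) ^ 2 ≤ 3 * (25 + 4 * n) * a ^ 2 := by
  have ha : 0 ≤ a := (abs_nonneg _).trans (hp x hx)
  have hd : ∀ x : EuclideanSpace ℝ (Fin n), ‖x‖ ≤ r →
      ((r ^ 2 - ‖x‖ ^ 2) * ev (pderiv i (Lap p)) x) ^ 2 ≤ 3 / 2 * (25 + 4 * n) * a ^ 2 := by
    intro y hy
    have := bernstein_step hr0 hr le_rfl i hL
      (fun z _ => by rw [h2, ev_zero, abs_zero]; exact ha)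
      (fun z _ => by rw [h2, map_zero, ev_zero]; simp) y hy
    simpa using this
  have h1 := bernstein_step hr0 hr (by positivity) i hp hL hd x hx
  have h0 : 0 ≤ (25 + 4 * n) * a ^ 2 := by positivity
  refine ⟨by linarith, (hd x hx).trans (by linarith)⟩

/-! ### Limits of biharmonic polynomials -/

/-- The sequence `p` is uniformly Cauchy on the closed ball of radius `r`. -/
def UCauchy (r : ℝ) (p : ℕ → MvPolynomial (Fin n) ℝ) : Prop :=
  ∀ ε > 0, ∃ N, ∀ i ≥ N, ∀ j ≥ N, ∀ x : EuclideanSpace ℝ (Fin n), ‖x‖ ≤ r →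
    |ev (p i - p j) x| ≤ ε

/-- A sequence of biharmonic polynomials which, together with their Laplacians, converges
uniformly on compact subsets of the open unit ball. -/
structure BiharmSeq (p : ℕ → MvPolynomial (Fin n) ℝ) : Prop where
  lap_lap : ∀ j, Lap (Lap (p j)) = 0
  cauchy : ∀ r < 1, UCauchy r p
  cauchy_lap : ∀ r < 1, UCauchy r fun j => Lap (p j)

/-- The pointwise limit of a sequence of polynomials, meaningful where it converges. -/
noncomputable def plim (p : ℕ → MvPolynomial (Fin n) ℝ) (x : EuclideanSpace ℝ (Fin n)) : ℝ :=
  limUnder atTop fun j => ev (p j) x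

lemma UCauchy.tendsto {r : ℝ} {p : ℕ → MvPolynomial (Fin n) ℝ} (h : UCauchy r p)
    {x : EuclideanSpace ℝ (Fin n)} (hx : ‖x‖ ≤ r) :
    Tendsto (fun j => ev (p j) x) atTop (𝓝 (plim p x)) := by
  refine CauchySeq.tendsto_limUnder (Metric.cauchySeq_iff.2 fun ε hε => ?_)
  obtain ⟨N, hN⟩ := h (ε / 2) (by positivity)
  refine ⟨N, fun i hi j hj => ?_⟩
  have := hN i hi j hj x hx
  rw [ev_sub] at this
  rw [Real.dist_eq]
  linarith

lemma UCauchy.tendstoUniformlyOn {r : ℝ} {p : ℕ → MvPolynomial (Fin n) ℝ} (h : UCauchy r p) :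
    TendstoUniformlyOn (fun j => ev (p j)) (plim p) atTop (Metric.closedBall 0 r) := by
  refine UniformCauchySeqOn.tendstoUniformlyOn_of_tendsto ?_
    fun x hx => h.tendsto (by simpa using hx)
  refine Metric.uniformCauchySeqOn_iff.2 fun ε hε => ?_
  obtain ⟨N, hN⟩ := h (ε / 2) (by positivity)
  refine ⟨N, fun i hi j hj x hx => ?_⟩
  have := hN i hi j hj x (by simpa using hx)
  rw [ev_sub] at this
  rw [Real.dist_eq]
  linarith

lemma UCauchy.continuousOn {r : ℝ} {p : ℕ → MvPolynomial (Fin n) ℝ} (h : UCauchy r p) :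
    ContinuousOn (plim p) (Metric.closedBall 0 r) :=
  h.tendstoUniformlyOn.continuousOn
    (Frequently.of_forall fun j => (continuous_ev (p j)).continuousOn)

lemma UCauchy.mono {r s : ℝ} {p : ℕ → MvPolynomial (Fin n) ℝ} (h : UCauchy r p) (hs : s ≤ r) :
    UCauchy s p := fun ε hε => by
  obtain ⟨N, hN⟩ := h ε hε
  exact ⟨N, fun i hi j hj x hx => hN i hi j hj x (hx.trans hs)⟩

lemma ucauchy_zero (r : ℝ) : UCauchy r fun _ => (0 : MvPolynomial (Fin n) ℝ) := fun ε hε =>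
  ⟨0, fun i _ j _ x _ => by rw [sub_zero, ev_zero, abs_zero]; exact hε.le⟩

lemma BiharmSeq.lap {p : ℕ → MvPolynomial (Fin n) ℝ} (h : BiharmSeq p) :
    BiharmSeq fun j => Lap (p j) where
  lap_lap j := by rw [h.lap_lap, map_zero]
  cauchy := h.cauchy_lap
  cauchy_lap r _ := by simpa only [h.lap_lap] using ucauchy_zero r

/-- By the interior derivative estimates the partial derivatives of the sequence converge too. -/
lemma BiharmSeq.pderiv {p : ℕ → MvPolynomial (Fin n) ℝ} (h : BiharmSeq p) (i : Fin n) :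
    BiharmSeq fun j => pderiv i (p j) := by
  have key : ∀ r < 1, ∀ ε > 0, ∃ N, ∀ j ≥ N, ∀ k ≥ N, ∀ x : EuclideanSpace ℝ (Fin n), ‖x‖ ≤ r →
      |ev (MvPolynomial.pderiv i (p j - p k)) x| ≤ ε ∧
      |ev (MvPolynomial.pderiv i (Lap (p j - p k))) x| ≤ ε := by
    intro r hr ε hε
    obtain ⟨R, hrR, hR⟩ := exists_between (max_lt hr zero_lt_one)
    have hR0 : 0 < R := (le_max_right _ _).trans_lt hrR
    have hrR' : r < R := (le_max_left _ _).trans_lt hrR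
    set s := max r 0 with hs
    have hs0 : 0 ≤ s := le_max_right _ _
    set δ := R ^ 2 - s ^ 2 with hδ
    have hδ0 : 0 < δ := by rw [hδ]; nlinarith
    set K : ℝ := 3 * (25 + 4 * n) with hK
    have hK1 : 1 ≤ K := by rw [hK]; linarith [Nat.cast_nonneg (α := ℝ) n]
    -- `a` is chosen so that `K a² ≤ (δ ε)²`, which uses `K ≥ 1`.
    obtain ⟨a, ha0, ha⟩ : ∃ a > 0, K * a ^ 2 ≤ (δ * ε) ^ 2 := by
      refine ⟨δ * ε / K, by positivity, ?_⟩
      rw [div_pow, mul_div_assoc', div_le_iff₀ (by positivity)]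
      have : 0 ≤ (δ * ε) ^ 2 := by positivity
      nlinarith [mul_nonneg this (by nlinarith : (0 : ℝ) ≤ K ^ 2 - K)]
    obtain ⟨N₁, hN₁⟩ := h.cauchy R hR a ha0
    obtain ⟨N₂, hN₂⟩ := h.cauchy_lap R hR a ha0
    refine ⟨max N₁ N₂, fun j hj k hk x hx => ?_⟩
    have hB := bernstein (p := p j - p k) hR0.le hR.le i
      (by rw [map_sub, map_sub, h.lap_lap, h.lap_lap, sub_zero])
      (hN₁ j (le_of_max_le_left hj) k (le_of_max_le_left hk))
      (by rw [map_sub]; exact hN₂ j (le_of_max_le_right hj) k (le_of_max_le_right hk))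
      x (hx.trans hrR'.le)
    have hφ : δ ≤ R ^ 2 - ‖x‖ ^ 2 := by
      have : ‖x‖ ≤ s := hx.trans (le_max_left _ _)
      have : ‖x‖ ^ 2 ≤ s ^ 2 := pow_le_pow_left₀ (norm_nonneg _) this 2
      linarith
    have hfin : ∀ t : ℝ, ((R ^ 2 - ‖x‖ ^ 2) * t) ^ 2 ≤ K * a ^ 2 → |t| ≤ ε := fun t ht => by
      have h1 : |(R ^ 2 - ‖x‖ ^ 2) * t| ≤ δ * ε :=
        abs_le_of_sq_le_sq (ht.trans ha) (by positivity)
      rw [abs_mul, abs_of_nonneg (hδ0.le.trans hφ)] at h1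
      have h2 : δ * |t| ≤ δ * ε := (mul_le_mul_of_nonneg_right hφ (abs_nonneg t)).trans h1
      exact le_of_mul_le_mul_left h2 hδ0
    exact ⟨hfin _ hB.1, hfin _ hB.2⟩
  refine ⟨fun j => by rw [Lap_pderiv, Lap_pderiv, h.lap_lap, map_zero],
    fun r hr ε hε => ?_, fun r hr ε hε => ?_⟩
  · obtain ⟨N, hN⟩ := key r hr ε hε
    refine ⟨N, fun j hj k hk x hx => ?_⟩
    rw [← map_sub]
    exact (hN j hj k hk x hx).1
  · obtain ⟨N, hN⟩ := key r hr ε hε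
    refine ⟨N, fun j hj k hk x hx => ?_⟩
    rw [← map_sub, ← map_sub, Lap_pderiv]
    exact (hN j hj k hk x hx).2

lemma BiharmSeq.hasFDerivAt {p : ℕ → MvPolynomial (Fin n) ℝ} (h : BiharmSeq p)
    {x : EuclideanSpace ℝ (Fin n)} (hx : ‖x‖ < 1) :
    HasFDerivAt (plim p) (linForm fun i => plim (fun j => MvPolynomial.pderiv i (p j)) x) x := by
  obtain ⟨R, hxR, hR⟩ := exists_between hx
  have hunif : TendstoUniformlyOn
      (fun j (y : EuclideanSpace ℝ (Fin n)) => fun i => ev (MvPolynomial.pderiv i (p j)) y)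
      (fun y => fun i => plim (fun j => MvPolynomial.pderiv i (p j)) y) atTop
      (Metric.ball 0 R) := by
    refine Metric.tendstoUniformlyOn_iff.2 fun ε hε => ?_
    have h1 : ∀ i, ∀ᶠ j in atTop, ∀ y ∈ Metric.closedBall (0 : EuclideanSpace ℝ (Fin n)) R,
        dist (plim (fun j => MvPolynomial.pderiv i (p j)) y)
          (ev (MvPolynomial.pderiv i (p j)) y) < ε := fun i =>
      Metric.tendstoUniformlyOn_iff.1 ((h.pderiv i).cauchy R hR).tendstoUniformlyOn ε hε
    filter_upwards [eventually_all.2 h1] with j hj y hy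
    exact (dist_pi_lt_iff hε).2 fun i => hj i y (Metric.ball_subset_closedBall hy)
  refine hasFDerivAt_of_tendstoUniformlyOn (l := atTop) Metric.isOpen_ball
    (linForm.uniformContinuous.comp_tendstoUniformlyOn hunif)
    (fun j y _ => hasFDerivAt_ev (p j) y) (fun y hy => ?_) (by simpa using hxR)
  exact (h.cauchy R hR).tendsto (by simpa using (mem_ball_zero_iff.1 hy).le)

lemma eventually_norm_lt_one {x : EuclideanSpace ℝ (Fin n)} (hx : ‖x‖ < 1) :
    ∀ᶠ y in 𝓝 x, ‖y‖ < 1 :=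
  continuous_norm.continuousAt.eventually_lt continuousAt_const hx

lemma BiharmSeq.contDiffAt (m : ℕ) {p : ℕ → MvPolynomial (Fin n) ℝ} (h : BiharmSeq p)
    {x : EuclideanSpace ℝ (Fin n)} (hx : ‖x‖ < 1) : ContDiffAt ℝ m (plim p) x := by
  induction m generalizing p with
  | zero =>
    rw [Nat.cast_zero, contDiffAt_zero]
    exact ⟨_, eventually_norm_lt_one hx, fun y hy =>
      (h.hasFDerivAt hy).continuousAt.continuousWithinAt⟩
  | succ m ih =>
    rw [Nat.cast_succ, contDiffAt_succ_iff_hasFDerivAt]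
    exact ⟨_, ⟨_, eventually_norm_lt_one hx, fun y hy => h.hasFDerivAt hy⟩,
      linForm.contDiff.contDiffAt.comp x (contDiffAt_pi.2 fun i => ih (h.pderiv i))⟩

lemma BiharmSeq.laplacian_eq {p : ℕ → MvPolynomial (Fin n) ℝ} (h : BiharmSeq p)
    {x : EuclideanSpace ℝ (Fin n)} (hx : ‖x‖ < 1) :
    laplacian (plim p) x = plim (fun j => Lap (p j)) x := by
  rw [Biharm.laplacian_eq ((eventually_norm_lt_one hx).mono fun y hy => h.hasFDerivAt hy)
    fun i => (h.pderiv i).hasFDerivAt hx]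
  refine tendsto_nhds_unique ?_ ((h.cauchy_lap _ hx).tendsto le_rfl)
  simp only [ev_Lap]
  exact tendsto_finsetSum _ fun i _ => (((h.pderiv i).pderiv i).cauchy _ hx).tendsto le_rfl

/-! ### Boundary data -/

/-- Stone-Weierstrass on the unit sphere. -/
lemma exists_poly_approx {h : EuclideanSpace ℝ (Fin n) → ℝ}
    (hh : ContinuousOn h (Metric.sphere (0 : EuclideanSpace ℝ (Fin n)) 1)) {ε : ℝ} (hε : 0 < ε) :
    ∃ p : MvPolynomial (Fin n) ℝ, ∀ x : EuclideanSpace ℝ (Fin n), ‖x‖ = 1 →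
      |ev p x - h x| ≤ ε := by
  let S := Metric.sphere (0 : EuclideanSpace ℝ (Fin n)) 1
  let coord : Fin n → C(S, ℝ) := fun i => ⟨fun x => (x : EuclideanSpace ℝ (Fin n)) i, by fun_prop⟩
  let A : Subalgebra ℝ C(S, ℝ) := (aeval coord : MvPolynomial (Fin n) ℝ →ₐ[ℝ] C(S, ℝ)).range
  have hev : ∀ (p : MvPolynomial (Fin n) ℝ) (x : S),
      (aeval coord p : C(S, ℝ)) x = ev p (x : EuclideanSpace ℝ (Fin n)) := fun p x => by
    induction p using MvPolynomial.induction_on with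
    | C a => rw [ev_C, aeval_C]; rfl
    | add p q hp hq => rw [map_add, ev_add, ContinuousMap.add_apply, hp, hq]
    | mul_X p i hp => rw [map_mul, ev_mul, ContinuousMap.mul_apply, hp, aeval_X, ev_X]; rfl
  have hsep : A.SeparatesPoints := fun x y hxy => by
    have : ∃ i, (x : EuclideanSpace ℝ (Fin n)) i ≠ (y : EuclideanSpace ℝ (Fin n)) i := by
      by_contra! hc
      exact hxy (Subtype.ext (PiLp.ext hc))
    obtain ⟨i, hi⟩ := this
    exact ⟨_, ⟨coord i, ⟨X i, aeval_X _ _⟩, rfl⟩, hi⟩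
  let f : C(S, ℝ) := ⟨fun x => h x, hh.domRestrict⟩
  have hf : f ∈ closure (A : Set C(S, ℝ)) := by
    have := ContinuousMap.subalgebra_topologicalClosure_eq_top_of_separatesPoints A hsep
    rw [← Subalgebra.topologicalClosure_coe, this]
    trivial
  obtain ⟨g, ⟨p, rfl⟩, hg⟩ := Metric.mem_closure_iff.1 hf ε hε
  refine ⟨p, fun x hx => ?_⟩
  have h1 := (ContinuousMap.dist_apply_le_dist (f := f) (g := aeval coord p)
    (⟨x, by simpa [S] using hx⟩ : S)).trans hg.le
  rw [dist_comm, Real.dist_eq, hev] at h1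
  exact h1

/-- Polynomials converging uniformly to the given function on the sphere. -/
lemma exists_poly_seq {h : EuclideanSpace ℝ (Fin n) → ℝ}
    (hh : ContinuousOn h (Metric.sphere (0 : EuclideanSpace ℝ (Fin n)) 1)) :
    ∃ p : ℕ → MvPolynomial (Fin n) ℝ, ∀ ε > 0, ∃ N, ∀ j ≥ N,
      ∀ x : EuclideanSpace ℝ (Fin n), ‖x‖ = 1 → |ev (p j) x - h x| ≤ ε := by
  choose p hp using fun j : ℕ => exists_poly_approx hh (Nat.one_div_pos_of_nat (α := ℝ) (n := j))
  refine ⟨p, fun ε hε => ?_⟩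
  obtain ⟨N, hN⟩ := exists_nat_one_div_lt hε
  refine ⟨N, fun j hj x hx => (hp j x hx).trans ?_⟩
  exact (Nat.one_div_le_one_div hj).trans hN.le

/-- If the Laplacians converge uniformly on the closed ball and the boundary values converge
uniformly on the sphere, then the polynomials converge uniformly on the closed ball, and the limit
has the expected boundary values. -/
lemma ucauchy_of_boundary (hn : 1 ≤ n) {p : ℕ → MvPolynomial (Fin n) ℝ}
    {h : EuclideanSpace ℝ (Fin n) → ℝ} (hL : UCauchy 1 fun j => Lap (p j))
    (hp : ∀ ε > 0, ∃ N, ∀ j ≥ N,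
      ∀ x : EuclideanSpace ℝ (Fin n), ‖x‖ = 1 → |ev (p j) x - h x| ≤ ε) :
    UCauchy 1 p ∧ ∀ x : EuclideanSpace ℝ (Fin n), ‖x‖ = 1 → plim p x = h x := by
  have hC : UCauchy 1 p := fun ε hε => by
    obtain ⟨N₁, hN₁⟩ := hL (ε / 3) (by positivity)
    obtain ⟨N₂, hN₂⟩ := hp (ε / 3) (by positivity)
    refine ⟨max N₁ N₂, fun i hi j hj x hx => ?_⟩
    have := abs_le_of_boundary (p := p i - p j) (M := 2 * (ε / 3)) (K := ε / 3) hn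
      (by positivity) (fun y hy => ?_) (fun y hy => ?_) x hx
    · linarith
    · rw [map_sub]
      exact hN₁ i (le_of_max_le_left hi) j (le_of_max_le_left hj) y hy
    · have h1 := hN₂ i (le_of_max_le_right hi) y hy
      have h2 := hN₂ j (le_of_max_le_right hj) y hy
      rw [ev_sub]
      rw [abs_le] at h1 h2 ⊢
      constructor <;> linarith
  refine ⟨hC, fun x hx => tendsto_nhds_unique (hC.tendsto hx.le) (Metric.tendsto_atTop.2 ?_)⟩
  intro ε hε
  obtain ⟨N, hN⟩ := hp (ε / 2) (by positivity)
  exact ⟨N, fun j hj => by rw [Real.dist_eq]; linarith [hN j hj x hx]⟩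

end Biharm

/-- Interior bi-harmonic extension of continuous boundary data: given
continuous `h, k` on the unit sphere of `ℝ^n` (`n ≥ 2`), there is a function `u`,
continuous on the closed unit ball and smooth on the open ball, with `Δ²u = 0` in the open
ball, `u = h` on the sphere, and `Δu` extending continuously to the closed ball with
boundary values `k`. -/
theorem statement12 (n : ℕ) (hn : 2 ≤ n) (h k : EuclideanSpace ℝ (Fin n) → ℝ)
    (hh : ContinuousOn h (Metric.sphere (0 : EuclideanSpace ℝ (Fin n)) 1))
    (hk : ContinuousOn k (Metric.sphere (0 : EuclideanSpace ℝ (Fin n)) 1)) :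
    ∃ u : EuclideanSpace ℝ (Fin n) → ℝ,
      ContinuousOn u (Metric.closedBall (0 : EuclideanSpace ℝ (Fin n)) 1) ∧
      ContDiffOn ℝ (⊤ : ℕ∞) u (Metric.ball (0 : EuclideanSpace ℝ (Fin n)) 1) ∧
      (∀ x ∈ Metric.ball (0 : EuclideanSpace ℝ (Fin n)) 1,
        laplacian (laplacian u) x = 0) ∧
      (∀ x : EuclideanSpace ℝ (Fin n), ‖x‖ = 1 → u x = h x) ∧
      ∃ v : EuclideanSpace ℝ (Fin n) → ℝ,
        ContinuousOn v (Metric.closedBall (0 : EuclideanSpace ℝ (Fin n)) 1) ∧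
        (∀ x ∈ Metric.ball (0 : EuclideanSpace ℝ (Fin n)) 1, v x = laplacian u x) ∧
        (∀ x : EuclideanSpace ℝ (Fin n), ‖x‖ = 1 → v x = k x) := by
  have hn1 : 1 ≤ n := by omega
  obtain ⟨P, hP⟩ := Biharm.exists_poly_seq hh
  obtain ⟨Q, hQ⟩ := Biharm.exists_poly_seq hk
  choose V hV0 hVQ using fun j => Biharm.exists_dirichlet hn1 (Q j) 0
  choose U hUV hUP using fun j => Biharm.exists_dirichlet hn1 (P j) (V j)
  obtain ⟨hVc, hVk⟩ := Biharm.ucauchy_of_boundary (p := V) (h := k) hn1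
    (by simpa only [hV0] using Biharm.ucauchy_zero 1) fun ε hε => by
      obtain ⟨N, hN⟩ := hQ ε hε
      exact ⟨N, fun j hj x hx => by rw [hVQ j x hx]; exact hN j hj x hx⟩
  obtain ⟨hUc, hUh⟩ := Biharm.ucauchy_of_boundary (p := U) (h := h) hn1
    (by simpa only [hUV] using hVc) fun ε hε => by
      obtain ⟨N, hN⟩ := hP ε hε
      exact ⟨N, fun j hj x hx => by rw [hUP j x hx]; exact hN j hj x hx⟩
  have hU : Biharm.BiharmSeq U :=
    ⟨fun j => by rw [hUV, hV0], fun r hr => hUc.mono hr.le,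
      fun r hr => by simpa only [hUV] using hVc.mono hr.le⟩
  have hV : Biharm.BiharmSeq V := by simpa only [hUV] using hU.lap
  have hlap : ∀ x : EuclideanSpace ℝ (Fin n), ‖x‖ < 1 →
      laplacian (Biharm.plim U) x = Biharm.plim V x := fun x hx => by
    rw [hU.laplacian_eq hx]
    simp only [hUV]
  refine ⟨Biharm.plim U, hUc.continuousOn, ?_, fun x hx => ?_, hUh, Biharm.plim V,
    hVc.continuousOn, fun x hx => (hlap x (by simpa using hx)).symm, hVk⟩
  · exact contDiffOn_infty.2 fun m x hx =>
      (hU.contDiffAt m (by simpa using hx)).contDiffWithinAt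
  · have hx1 : ‖x‖ < 1 := by simpa using hx
    -- The Laplacian depends only on the germ, so `laplacian (plim U)` may be replaced by `plim V`.
    have hgerm : laplacian (Biharm.plim U) =ᶠ[nhds x] Biharm.plim V :=
      (Biharm.eventually_norm_lt_one hx1).mono hlap
    have : laplacian (laplacian (Biharm.plim U)) x = laplacian (Biharm.plim V) x := by
      unfold laplacian at hgerm ⊢
      refine Finset.sum_congr rfl fun i _ => ?_
      rw [hgerm.iteratedFDeriv ℝ 2 |>.eq_of_nhds]
    rw [this, hV.laplacian_eq hx1]
    simp only [hV0]
    exact tendsto_nhds_unique ((Biharm.ucauchy_zero 1).tendsto hx1.le)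
      (by simp only [Biharm.ev_zero]; exact tendsto_const_nhds)
end

section
/- Let n ≥ 5 be an integer and let h, k : S^{n−1} → ℝ be continuous functions on the unit sphere of ℝ^n. Then there exist a function u, continuous on {x ∈ ℝ^n : ‖x‖ ≥ 1} and smooth on {x : ‖x‖ > 1}, and a constant c > 0 depending only on n, such that: Δ(Δu) = 0 on {x : ‖x‖ > 1}; u = h on the unit sphere; Δu extends continuously to {x : ‖x‖ ≥ 1} with boundary values equal to k on the unit sphere; and for all x with ‖x‖ ≥ 1, ‖x‖^{n−4} |u(x)| + ‖x‖^{n−2} |Δu(x)| ≤ c (sup_{S^{n−1}} |h| + sup_{S^{n−1}} |k|). In particular u(x) = O(‖x‖^{4−n}) as ‖x‖ → ∞. -/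
open Set Filter Topology MeasureTheory

/-! ### The Laplacian along coordinate lines -/

lemma hasDerivAt_line {n : ℕ} {f : EuclideanSpace ℝ (Fin n) → ℝ}
    {x e : EuclideanSpace ℝ (Fin n)} {t : ℝ} (hf : DifferentiableAt ℝ f (x + t • e)) :
    HasDerivAt (fun s : ℝ => f (x + s • e)) (fderiv ℝ f (x + t • e) e) t := by
  have h1 : HasDerivAt (fun s : ℝ => x + s • e) e t := by
    simpa using ((hasDerivAt_id t).smul_const e).const_add x
  exact hf.hasFDerivAt.comp_hasDerivAt t h1

/-- A second directional derivative is computed along the line `t ↦ x + t • e` from any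
first derivative `ψ` of the restriction to that line. -/
lemma iteratedFDeriv_two_eq_of_line {n : ℕ} {f : EuclideanSpace ℝ (Fin n) → ℝ}
    {x e : EuclideanSpace ℝ (Fin n)} (hf : ContDiffAt ℝ 2 f x) {ψ : ℝ → ℝ} {c : ℝ}
    (h1 : ∀ᶠ t in 𝓝 (0 : ℝ), HasDerivAt (fun s : ℝ => f (x + s • e)) (ψ t) t)
    (h2 : HasDerivAt ψ c 0) :
    iteratedFDeriv ℝ 2 f x ![e, e] = c := by
  have hline : Tendsto (fun s : ℝ => x + s • e) (𝓝 0) (𝓝 x) := by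
    have : Continuous (fun s : ℝ => x + s • e) := by fun_prop
    simpa using this.tendsto 0
  have hd : ∀ᶠ y in 𝓝 x, DifferentiableAt ℝ f y := by
    filter_upwards [hf.eventually (by simp)] with y hy
    exact hy.differentiableAt (by simp)
  have hψ : ψ =ᶠ[𝓝 0] fun t => fderiv ℝ f (x + t • e) e := by
    filter_upwards [h1, hline.eventually hd] with t ht htd
    exact ht.unique (hasDerivAt_line htd)
  have hfd : HasFDerivAt (fderiv ℝ f) (fderiv ℝ (fderiv ℝ f) x) (x + (0 : ℝ) • e) := by
    have := (hf.fderiv_right (m := 1) (by norm_num)).differentiableAt (by simp)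
    simpa using this.hasFDerivAt
  have hl : HasDerivAt (fun s : ℝ => x + s • e) e 0 := by
    simpa using ((hasDerivAt_id (0 : ℝ)).smul_const e).const_add x
  have h3 : HasDerivAt (fun t : ℝ => fderiv ℝ f (x + t • e)) (fderiv ℝ (fderiv ℝ f) x e) 0 :=
    hfd.comp_hasDerivAt (0 : ℝ) hl
  have h4 : HasDerivAt (fun t : ℝ => fderiv ℝ f (x + t • e) e) (fderiv ℝ (fderiv ℝ f) x e e) 0 := by
    simpa using h3.clm_apply (hasDerivAt_const (0 : ℝ) e)
  rw [iteratedFDeriv_two_apply]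
  simpa using (h4.congr_of_eventuallyEq hψ).unique h2

lemma laplacian_congr {n : ℕ} {f g : EuclideanSpace ℝ (Fin n) → ℝ}
    {x : EuclideanSpace ℝ (Fin n)} (h : f =ᶠ[𝓝 x] g) : laplacian f x = laplacian g x := by
  unfold laplacian
  rw [(h.iteratedFDeriv ℝ 2).eq_of_nhds]

lemma laplacian_add {n : ℕ} {f g : EuclideanSpace ℝ (Fin n) → ℝ}
    {x : EuclideanSpace ℝ (Fin n)} (hf : ContDiffAt ℝ 2 f x) (hg : ContDiffAt ℝ 2 g x) :
    laplacian (fun y => f y + g y) x = laplacian f x + laplacian g x := by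
  unfold laplacian
  rw [← Finset.sum_add_distrib]
  refine Finset.sum_congr rfl fun i _ => ?_
  have := iteratedFDeriv_add_apply (i := 2) hf hg
  simp only [Pi.add_def] at this
  rw [this]; rfl

lemma laplacian_const_mul {n : ℕ} {f : EuclideanSpace ℝ (Fin n) → ℝ}
    {x : EuclideanSpace ℝ (Fin n)} (a : ℝ) (hf : ContDiffAt ℝ 2 f x) :
    laplacian (fun y => a * f y) x = a * laplacian f x := by
  unfold laplacian
  rw [Finset.mul_sum]
  refine Finset.sum_congr rfl fun i _ => ?_
  have := iteratedFDeriv_const_smul_apply (i := 2) (a := a) hf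
  have h2 : (fun y => a * f y) = a • f := by ext; simp
  rw [h2, this]; rfl

lemma sum_inner_single_sq {n : ℕ} (x y : EuclideanSpace ℝ (Fin n)) :
    ∑ i : Fin n, inner ℝ x (EuclideanSpace.single i 1) * inner ℝ y (EuclideanSpace.single i 1)
      = inner ℝ x y := by
  have := (EuclideanSpace.basisFun (Fin n) ℝ).sum_inner_mul_inner x y
  simp only [EuclideanSpace.basisFun_apply] at this
  rw [← this]
  refine Finset.sum_congr rfl fun i _ => ?_
  rw [real_inner_comm y]

lemma norm_sq_line {n : ℕ} (x e : EuclideanSpace ℝ (Fin n)) (he : ‖e‖ = 1) (t : ℝ) :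
    ‖x + t • e‖ ^ 2 = ‖x‖ ^ 2 + 2 * inner ℝ x e * t + t ^ 2 := by
  rw [norm_add_sq_real, inner_smul_right, norm_smul, he]
  simp; ring

/-- The Laplacian of a radial function `G (‖x‖ ^ 2)`, written in the variable `q = ‖x‖ ^ 2`. -/
lemma laplacian_radial {n : ℕ} {G G' : ℝ → ℝ} {G'' : ℝ} {x : EuclideanSpace ℝ (Fin n)}
    (hc : ContDiffAt ℝ 2 (fun y : EuclideanSpace ℝ (Fin n) => G (‖y‖ ^ 2)) x)
    (h1 : ∀ᶠ q in 𝓝 (‖x‖ ^ 2), HasDerivAt G (G' q) q)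
    (h2 : HasDerivAt G' G'' (‖x‖ ^ 2)) :
    laplacian (fun y : EuclideanSpace ℝ (Fin n) => G (‖y‖ ^ 2)) x
      = 4 * ‖x‖ ^ 2 * G'' + 2 * n * G' (‖x‖ ^ 2) := by
  have key : ∀ i : Fin n, iteratedFDeriv ℝ 2 (fun y : EuclideanSpace ℝ (Fin n) => G (‖y‖ ^ 2)) x
      ![EuclideanSpace.single i 1, EuclideanSpace.single i 1]
      = 4 * G'' * (inner ℝ x (EuclideanSpace.single i 1) * inner ℝ x (EuclideanSpace.single i 1))
        + 2 * G' (‖x‖ ^ 2) := by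
    intro i
    set e : EuclideanSpace ℝ (Fin n) := EuclideanSpace.single i 1
    have he : ‖e‖ = 1 := by simp [e]
    set b := inner ℝ x e
    have hN : ∀ t : ℝ, HasDerivAt (fun s : ℝ => ‖x‖ ^ 2 + 2 * b * s + s ^ 2) (2 * b + 2 * t) t := by
      intro t
      have := (((hasDerivAt_id t).const_mul (2 * b)).const_add (‖x‖ ^ 2)).add ((hasDerivAt_id t).pow 2)
      refine HasDerivAt.congr_deriv (this.congr_of_eventuallyEq ?_) ?_
      · exact Eventually.of_forall fun s => by simp
      · simp
    have hN0 : Tendsto (fun s : ℝ => ‖x‖ ^ 2 + 2 * b * s + s ^ 2) (𝓝 0) (𝓝 (‖x‖ ^ 2)) := by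
      simpa using (hN 0).continuousAt.tendsto
    refine iteratedFDeriv_two_eq_of_line
      (ψ := fun t => G' (‖x‖ ^ 2 + 2 * b * t + t ^ 2) * (2 * b + 2 * t)) hc ?_ ?_
    · filter_upwards [hN0.eventually h1] with t ht
      simp only [norm_sq_line x e he]
      exact ht.comp t (hN t)
    · have h2' : HasDerivAt G' G'' (‖x‖ ^ 2 + 2 * b * 0 + 0 ^ 2) := by simpa using h2
      have := (h2'.comp (0 : ℝ) (hN 0)).mul (((hasDerivAt_id (0 : ℝ)).const_mul 2).const_add (2 * b))
      refine this.congr_deriv ?_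
      simp; ring
  unfold laplacian
  rw [Finset.sum_congr rfl fun i _ => key i, Finset.sum_add_distrib, ← Finset.mul_sum,
    sum_inner_single_sq, real_inner_self_eq_norm_sq]
  simp; ring

/-- Product rule for the Laplacian against the quadratic factor `‖x‖ ^ 2 - 1`. -/
lemma laplacian_quadratic_mul {n : ℕ} {W : EuclideanSpace ℝ (Fin n) → ℝ}
    {x : EuclideanSpace ℝ (Fin n)} (hW : ContDiffAt ℝ 2 W x) :
    laplacian (fun y => (‖y‖ ^ 2 - 1) * W y) x
      = 2 * n * W x + 4 * fderiv ℝ W x x + (‖x‖ ^ 2 - 1) * laplacian W x := by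
  have hd : ∀ᶠ y in 𝓝 x, DifferentiableAt ℝ W y := by
    filter_upwards [hW.eventually (by simp)] with y hy
    exact hy.differentiableAt (by simp)
  have hc : ContDiffAt ℝ 2 (fun y => (‖y‖ ^ 2 - 1) * W y) x :=
    (((contDiff_norm_sq ℝ).contDiffAt).sub contDiffAt_const).mul hW
  have key : ∀ i : Fin n, iteratedFDeriv ℝ 2 (fun y => (‖y‖ ^ 2 - 1) * W y) x
      ![EuclideanSpace.single i 1, EuclideanSpace.single i 1]
      = 2 * W x + 4 * (x i * fderiv ℝ W x (EuclideanSpace.single i 1))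
        + (‖x‖ ^ 2 - 1) * iteratedFDeriv ℝ 2 W x
            ![EuclideanSpace.single i 1, EuclideanSpace.single i 1] := by
    intro i
    have hxi : x i = inner ℝ x (EuclideanSpace.single i 1) := by
      simp [EuclideanSpace.inner_single_right]
    rw [hxi]
    set e : EuclideanSpace ℝ (Fin n) := EuclideanSpace.single i 1
    have he : ‖e‖ = 1 := by simp [e]
    set b := inner ℝ x e
    have hN : ∀ t : ℝ, HasDerivAt (fun s : ℝ => ‖x‖ ^ 2 + 2 * b * s + s ^ 2 - 1) (2 * b + 2 * t) t := by
      intro t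
      have := ((((hasDerivAt_id t).const_mul (2 * b)).const_add (‖x‖ ^ 2)).add
        ((hasDerivAt_id t).pow 2)).sub_const 1
      refine HasDerivAt.congr_deriv (this.congr_of_eventuallyEq ?_) ?_
      · exact Eventually.of_forall fun s => by simp
      · simp
    have hline : Tendsto (fun s : ℝ => x + s • e) (𝓝 0) (𝓝 x) := by
      have : Continuous (fun s : ℝ => x + s • e) := by fun_prop
      simpa using this.tendsto 0
    have hW0 : HasDerivAt (fun s : ℝ => W (x + s • e)) (fderiv ℝ W x e) 0 := by
      have := hasDerivAt_line (f := W) (x := x) (e := e) (t := 0)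
        (by simpa using hd.self_of_nhds)
      simpa using this
    have hfd : HasFDerivAt (fderiv ℝ W) (fderiv ℝ (fderiv ℝ W) x) (x + (0 : ℝ) • e) := by
      have := (hW.fderiv_right (m := 1) (by norm_num)).differentiableAt (by simp)
      simpa using this.hasFDerivAt
    have hl : HasDerivAt (fun s : ℝ => x + s • e) e 0 := by
      simpa using ((hasDerivAt_id (0 : ℝ)).smul_const e).const_add x
    have h3 : HasDerivAt (fun t : ℝ => fderiv ℝ W (x + t • e)) (fderiv ℝ (fderiv ℝ W) x e) 0 :=
      hfd.comp_hasDerivAt (0 : ℝ) hl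
    have h4 : HasDerivAt (fun t : ℝ => fderiv ℝ W (x + t • e) e)
        (fderiv ℝ (fderiv ℝ W) x e e) 0 := by
      simpa using h3.clm_apply (hasDerivAt_const (0 : ℝ) e)
    refine iteratedFDeriv_two_eq_of_line
      (ψ := fun t => (2 * b + 2 * t) * W (x + t • e)
        + (‖x‖ ^ 2 + 2 * b * t + t ^ 2 - 1) * fderiv ℝ W (x + t • e) e) hc ?_ ?_
    · filter_upwards [hline.eventually hd] with t ht
      simp only [norm_sq_line x e he]
      exact (hN t).mul (hasDerivAt_line ht)
    · have h5 := ((((hasDerivAt_id (0 : ℝ)).const_mul 2).const_add (2 * b)).mul hW0).add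
        ((hN 0).mul h4)
      refine h5.congr_deriv ?_
      rw [iteratedFDeriv_two_apply]
      simp; ring
  have hx : ∑ i : Fin n, x i * fderiv ℝ W x (EuclideanSpace.single i 1) = fderiv ℝ W x x := by
    conv_rhs => rw [show fderiv ℝ W x x = fderiv ℝ W x
      (∑ i, x i • (EuclideanSpace.single i 1 : EuclideanSpace ℝ (Fin n))) from by
        congr 1
        have := (EuclideanSpace.basisFun (Fin n) ℝ).sum_repr x
        simpa using this.symm]
    simp [map_sum]
  unfold laplacian
  rw [Finset.sum_congr rfl fun i _ => key i, Finset.sum_add_distrib, Finset.sum_add_distrib,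
    ← Finset.mul_sum, ← Finset.mul_sum, ← Finset.mul_sum, hx]
  simp only [Finset.sum_const, Finset.card_univ, Fintype.card_fin, nsmul_eq_mul]
  ring

/-! ### The Poisson kernel -/

/-- The (unnormalised) Poisson kernel `(‖x‖² - ‖z‖²) / ‖x - z‖ⁿ` on `ℝ^n`. The pole `z` ranges
over the closed unit ball, and not only over its boundary: the poles `s • y` with `0 < s < 1`
give the Poisson kernels of the smaller spheres. -/
noncomputable def poissonKer {n : ℕ} (x z : EuclideanSpace ℝ (Fin n)) : ℝ :=
  (‖x‖ ^ 2 - ‖z‖ ^ 2) * (‖x - z‖ ^ 2) ^ (-((n : ℝ) / 2))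

lemma poissonKer_nonneg {n : ℕ} {x z : EuclideanSpace ℝ (Fin n)} (h : ‖z‖ ≤ ‖x‖) :
    0 ≤ poissonKer x z := by
  unfold poissonKer
  have : 0 ≤ ‖x‖ ^ 2 - ‖z‖ ^ 2 := by nlinarith [norm_nonneg x, norm_nonneg z]
  positivity

lemma poissonKer_pos {n : ℕ} {x z : EuclideanSpace ℝ (Fin n)} (h : ‖z‖ < ‖x‖) :
    0 < poissonKer x z := by
  unfold poissonKer
  have h1 : 0 < ‖x‖ ^ 2 - ‖z‖ ^ 2 := by nlinarith [norm_nonneg x, norm_nonneg z]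
  have h2 : 0 < ‖x - z‖ := by
    rw [norm_pos_iff, sub_ne_zero]; rintro rfl; exact lt_irrefl _ h
  positivity

/-- Moving the point outwards is the same as moving the pole inwards. -/
lemma poissonKer_inv_smul {n : ℕ} (x y : EuclideanSpace ℝ (Fin n)) {s : ℝ} (hs : 0 < s) :
    poissonKer (s⁻¹ • x) y = s ^ ((n : ℝ) - 2) * poissonKer x (s • y) := by
  have h1 : s⁻¹ • x - y = s⁻¹ • (x - s • y) := by
    rw [smul_sub, smul_smul, inv_mul_cancel₀ hs.ne', one_smul]
  have h3 : (s⁻¹ ^ 2 : ℝ) ^ (-((n : ℝ) / 2)) = s ^ (n : ℝ) := by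
    rw [← Real.rpow_natCast (s⁻¹) 2, ← Real.rpow_mul (by positivity), Real.inv_rpow hs.le,
      ← Real.rpow_neg hs.le]
    congr 1; push_cast; ring
  have h4 : s ^ ((n : ℝ) - 2) = s ^ (n : ℝ) * (s⁻¹) ^ 2 := by
    rw [Real.rpow_sub hs, inv_pow, ← Real.rpow_natCast s 2]; norm_num; rfl
  unfold poissonKer
  rw [h1, norm_smul, norm_smul, norm_smul, Real.norm_of_nonneg (inv_nonneg.2 hs.le),
    Real.norm_of_nonneg hs.le, mul_pow, mul_pow, mul_pow,
    Real.mul_rpow (by positivity) (by positivity), h3, h4]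
  have : ‖y‖ ^ 2 = s⁻¹ ^ 2 * (s ^ 2 * ‖y‖ ^ 2) := by field_simp
  rw [this]
  field_simp

lemma contDiffAt_poissonKer {n : ℕ} {x z : EuclideanSpace ℝ (Fin n)} (h : x ≠ z) :
    ContDiffAt ℝ 2 (fun y => poissonKer y z) x := by
  unfold poissonKer
  refine ContDiffAt.mul ?_ ?_
  · exact ((contDiff_norm_sq ℝ).contDiffAt).sub contDiffAt_const
  · refine ContDiffAt.rpow_const_of_ne ?_ ?_
    · exact (contDiffAt_id.sub contDiffAt_const).norm_sq ℝ
    · have : 0 < ‖x - z‖ := norm_pos_iff.2 (sub_ne_zero.2 h)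
      positivity

lemma laplacian_poissonKer {n : ℕ} {x z : EuclideanSpace ℝ (Fin n)} (h : x ≠ z) :
    laplacian (fun y => poissonKer y z) x = 0 := by
  have hpos : 0 < ‖x - z‖ := norm_pos_iff.2 (sub_ne_zero.2 h)
  set p : ℝ := (n : ℝ) / 2 with hp
  set Q : ℝ := ‖x - z‖ ^ 2 with hQ
  have hQ0 : 0 < Q := by positivity
  set N : ℝ := ‖x‖ ^ 2 - ‖z‖ ^ 2 with hN
  have key : ∀ i : Fin n, iteratedFDeriv ℝ 2 (fun y => poissonKer y z) x
      ![EuclideanSpace.single i 1, EuclideanSpace.single i 1]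
      = (2 * Q ^ (-p) - 2 * N * p * Q ^ (-p - 1))
        - 8 * p * Q ^ (-p - 1) * (inner ℝ x (EuclideanSpace.single i 1)
            * inner ℝ (x - z) (EuclideanSpace.single i 1))
        + 4 * N * p * (p + 1) * Q ^ (-p - 1 - 1) * (inner ℝ (x - z) (EuclideanSpace.single i 1)
            * inner ℝ (x - z) (EuclideanSpace.single i 1)) := by
    intro i
    set e : EuclideanSpace ℝ (Fin n) := EuclideanSpace.single i 1
    have he : ‖e‖ = 1 := by simp [e]
    set b := inner ℝ x e
    set d := inner ℝ (x - z) e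
    have hq : ∀ A b t : ℝ, HasDerivAt (fun s : ℝ => A + 2 * b * s + s ^ 2) (2 * b + 2 * t) t := by
      intro A b t
      have := (((hasDerivAt_id t).const_mul (2 * b)).const_add A).add ((hasDerivAt_id t).pow 2)
      refine HasDerivAt.congr_deriv (this.congr_of_eventuallyEq ?_) ?_
      · exact Eventually.of_forall fun s => by simp
      · simp
    have hD0 : ∀ᶠ t in 𝓝 (0 : ℝ), Q + 2 * d * t + t ^ 2 ≠ 0 := by
      have h1 : Tendsto (fun s : ℝ => Q + 2 * d * s + s ^ 2) (𝓝 0) (𝓝 Q) := by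
        simpa using (hq Q d 0).continuousAt.tendsto
      exact h1.eventually_ne hQ0.ne'
    have hr : ∀ r t : ℝ, Q + 2 * d * t + t ^ 2 ≠ 0 →
        HasDerivAt (fun s : ℝ => (Q + 2 * d * s + s ^ 2) ^ r)
          ((2 * d + 2 * t) * r * (Q + 2 * d * t + t ^ 2) ^ (r - 1)) t :=
      fun r t ht => (hq Q d t).rpow_const (Or.inl ht)
    have hf : (fun s : ℝ => poissonKer (x + s • e) z)
        = fun s : ℝ => (N + 2 * b * s + s ^ 2) * (Q + 2 * d * s + s ^ 2) ^ (-p) := by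
      funext s
      unfold poissonKer
      rw [show x + s • e - z = (x - z) + s • e by abel, norm_sq_line x e he,
        norm_sq_line (x - z) e he]
      congr 1; rw [hN]; ring
    refine iteratedFDeriv_two_eq_of_line
      (ψ := fun t => (2 * b + 2 * t) * (Q + 2 * d * t + t ^ 2) ^ (-p)
        + (N + 2 * b * t + t ^ 2) * ((2 * d + 2 * t) * (-p) * (Q + 2 * d * t + t ^ 2) ^ (-p - 1)))
      (contDiffAt_poissonKer h) ?_ ?_
    · filter_upwards [hD0] with t ht
      rw [hf]
      exact (hq N b t).mul (hr (-p) t ht)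
    · have h0 := hD0.self_of_nhds
      have hlin : ∀ b : ℝ, HasDerivAt (fun t : ℝ => 2 * b + 2 * t) 2 0 := fun b => by
        simpa using ((hasDerivAt_id (0 : ℝ)).const_mul 2).const_add (2 * b)
      have h5 := ((hlin b).mul (hr (-p) 0 h0)).add
        ((hq N b 0).mul (((hlin d).mul_const (-p)).mul (hr (-p - 1) 0 h0)))
      refine h5.congr_deriv ?_
      simp; ring
  have hxz : 2 * inner ℝ x (x - z) = Q + N := by
    rw [hQ, hN, norm_sub_sq_real, inner_sub_right, real_inner_self_eq_norm_sq]; ring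
  have hn : (n : ℝ) = 2 * p := by rw [hp]; ring
  have e1 : Q ^ (-p) = Q ^ (-p - 1) * Q := by
    rw [Real.rpow_sub_one hQ0.ne']; field_simp
  have e2 : Q ^ (-p - 1 - 1) * Q = Q ^ (-p - 1) := by
    rw [Real.rpow_sub_one hQ0.ne' (-p - 1)]; field_simp
  unfold laplacian
  rw [Finset.sum_congr rfl fun i _ => key i, Finset.sum_add_distrib, Finset.sum_sub_distrib,
    ← Finset.mul_sum, ← Finset.mul_sum, sum_inner_single_sq, sum_inner_single_sq,
    real_inner_self_eq_norm_sq, ← hQ]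
  simp only [Finset.sum_const, Finset.card_univ, Fintype.card_fin, nsmul_eq_mul]
  rw [hn, e1]
  linear_combination (-4 * p * Q ^ (-p - 1)) * hxz + 4 * N * p * (p + 1) * e2

/-! ### The kernel as a smooth map into continuous functions of the pole -/

section SqrtC

variable {Z : Type*} [TopologicalSpace Z] [CompactSpace Z]

/-- Pointwise square root on `C(Z, ℝ)`. -/
noncomputable def sqrtC (a : C(Z, ℝ)) : C(Z, ℝ) := ⟨fun z => √(a z), by fun_prop⟩

/-- The square root is smooth at positive functions: by the inverse function theorem in the
Banach algebra `C(Z, ℝ)`, it is the local inverse of `b ↦ b * b`, whose derivative at the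
invertible element `b` is multiplication by `2 b`. -/
lemma contDiffAt_sqrtC {a : C(Z, ℝ)} (ha : ∀ z, 0 < a z) :
    ContDiffAt ℝ (⊤ : ℕ∞) (sqrtC : C(Z, ℝ) → C(Z, ℝ)) a := by
  set b : C(Z, ℝ) := sqrtC a with hb
  have hbz : ∀ z, b z = √(a z) := fun z => rfl
  have hbpos : ∀ z, 0 < b z := fun z => Real.sqrt_pos.2 (ha z)
  have hbb : b * b = a := by
    ext z; simp [hbz, Real.mul_self_sqrt (ha z).le]
  obtain ⟨w, hw⟩ : IsUnit ((2 : ℝ) • b) := by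
    rw [ContinuousMap.isUnit_iff_forall_ne_zero]
    intro z
    have := hbpos z
    simp only [ContinuousMap.smul_apply, smul_eq_mul]
    positivity
  let f' : C(Z, ℝ) ≃L[ℝ] C(Z, ℝ) := ContinuousLinearEquiv.equivOfInverse
    (ContinuousLinearMap.mul ℝ C(Z, ℝ) (w : C(Z, ℝ)))
    (ContinuousLinearMap.mul ℝ C(Z, ℝ) ((w⁻¹ : C(Z, ℝ)ˣ) : C(Z, ℝ)))
    (fun c => by simp) (fun c => by simp)
  have hf : ContDiffAt ℝ (⊤ : ℕ∞) (fun c : C(Z, ℝ) => c * c) b :=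
    contDiffAt_id.mul contDiffAt_id
  have hf' : HasFDerivAt (fun c : C(Z, ℝ) => c * c) (f' : C(Z, ℝ) →L[ℝ] C(Z, ℝ)) b := by
    have := (hasFDerivAt_id (𝕜 := ℝ) b).mul (hasFDerivAt_id (𝕜 := ℝ) b)
    refine this.congr_fderiv ?_
    ext c z
    simp [f', hw]
    ring
  have htop : ((⊤ : ℕ∞) : WithTop ℕ∞) ≠ 0 := by simp
  have hloc := hf.to_localInverse hf' htop
  beta_reduce at hloc
  rw [hbb] at hloc
  refine hloc.congr_of_eventuallyEq ?_
  have hev : ∀ᶠ c in 𝓝 b, sqrtC ((fun c : C(Z, ℝ) => c * c) c) = c := by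
    have ho : IsOpen {c : C(Z, ℝ) | MapsTo c univ (Ioi 0)} :=
      ContinuousMap.isOpen_setOfPred_mapsTo isCompact_univ isOpen_Ioi
    filter_upwards [ho.mem_nhds (fun z _ => hbpos z)] with c hc
    ext z
    have : 0 < c z := hc (mem_univ z)
    simp [sqrtC, Real.sqrt_mul_self this.le]
  have := (hf.hasStrictFDerivAt' hf' htop).localInverse_unique hev
  beta_reduce at this
  rw [hbb] at this
  exact this

end SqrtC

/-- The closed unit ball of `ℝ^n`, the compact space of poles. -/
abbrev UBall (n : ℕ) : Type := Metric.closedBall (0 : EuclideanSpace ℝ (Fin n)) 1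

lemma norm_le_of_uBall {n : ℕ} (z : UBall n) : ‖(z : EuclideanSpace ℝ (Fin n))‖ ≤ 1 :=
  mem_closedBall_zero_iff.1 z.2

/-- The Poisson kernel as a function of the pole, valued in the Banach algebra `C(UBall n, ℝ)`. -/
noncomputable def kerC {n : ℕ} (x : EuclideanSpace ℝ (Fin n)) : C(UBall n, ℝ) :=
  (‖x‖ ^ 2 • (1 : C(UBall n, ℝ)) -
      (⟨fun z => ‖(z : EuclideanSpace ℝ (Fin n))‖ ^ 2, by fun_prop⟩ : C(UBall n, ℝ))) *
    (Ring.inverse (sqrtC (⟨fun z => ‖x - (z : EuclideanSpace ℝ (Fin n))‖ ^ 2, by fun_prop⟩ :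
      C(UBall n, ℝ)))) ^ n

lemma kerC_aux_pos {n : ℕ} {x : EuclideanSpace ℝ (Fin n)} (hx : 1 < ‖x‖) (z : UBall n) :
    0 < ‖x - (z : EuclideanSpace ℝ (Fin n))‖ := by
  rw [norm_pos_iff, sub_ne_zero]
  rintro h
  have := norm_le_of_uBall z
  rw [← h] at this
  linarith

lemma kerC_apply {n : ℕ} {x : EuclideanSpace ℝ (Fin n)} (hx : 1 < ‖x‖) (z : UBall n) :
    kerC x z = poissonKer x z := by
  set g : C(UBall n, ℝ) := sqrtC ⟨fun z => ‖x - (z : EuclideanSpace ℝ (Fin n))‖ ^ 2, by fun_prop⟩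
    with hg
  have hgz : ∀ z, g z = ‖x - (z : EuclideanSpace ℝ (Fin n))‖ := fun z => by
    simp [hg, sqrtC]
  have hu : IsUnit g := by
    rw [ContinuousMap.isUnit_iff_forall_ne_zero]
    intro z; rw [hgz]; exact (kerC_aux_pos hx z).ne'
  have hinv : (Ring.inverse g) z = ‖x - (z : EuclideanSpace ℝ (Fin n))‖⁻¹ := by
    have h1 := congrArg (fun c : C(UBall n, ℝ) => c z) (Ring.inverse_mul_cancel g hu)
    simp only [ContinuousMap.mul_apply, ContinuousMap.one_apply, hgz] at h1
    exact eq_inv_of_mul_eq_one_left h1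
  have h0 := kerC_aux_pos hx z
  unfold kerC poissonKer
  rw [← hg]
  simp only [ContinuousMap.mul_apply, ContinuousMap.sub_apply, ContinuousMap.smul_apply,
    ContinuousMap.one_apply, ContinuousMap.pow_apply, ContinuousMap.coe_mk, smul_eq_mul, mul_one,
    hinv]
  congr 1
  rw [← Real.rpow_natCast _ 2, ← Real.rpow_mul h0.le, inv_pow, ← Real.rpow_natCast _ n,
    ← Real.rpow_neg h0.le]
  congr 1; push_cast; ring

lemma contDiffAt_kerC {n : ℕ} {x : EuclideanSpace ℝ (Fin n)} (hx : 1 < ‖x‖) :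
    ContDiffAt ℝ (⊤ : ℕ∞) (kerC : EuclideanSpace ℝ (Fin n) → C(UBall n, ℝ)) x := by
  let ℓ : EuclideanSpace ℝ (Fin n) →ₗ[ℝ] C(UBall n, ℝ) :=
    { toFun := fun y => ⟨fun z => inner ℝ y (z : EuclideanSpace ℝ (Fin n)), by fun_prop⟩
      map_add' := fun y y' => by ext z; simp [inner_add_left]
      map_smul' := fun c y => by ext z; simp [inner_smul_left] }
  have hℓ : ContDiff ℝ (⊤ : ℕ∞) (fun y => ℓ y) :=
    (LinearMap.toContinuousLinearMap ℓ).contDiff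
  have hn2 : ContDiff ℝ (⊤ : ℕ∞) (fun y : EuclideanSpace ℝ (Fin n) => ‖y‖ ^ 2) :=
    contDiff_norm_sq ℝ
  let n2 : C(UBall n, ℝ) := ⟨fun z => ‖(z : EuclideanSpace ℝ (Fin n))‖ ^ 2, by fun_prop⟩
  have hq : ContDiff ℝ (⊤ : ℕ∞) (fun y : EuclideanSpace ℝ (Fin n) =>
      (⟨fun z => ‖y - (z : EuclideanSpace ℝ (Fin n))‖ ^ 2, by fun_prop⟩ : C(UBall n, ℝ))) := by
    have h1 : (fun y : EuclideanSpace ℝ (Fin n) =>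
        (⟨fun z => ‖y - (z : EuclideanSpace ℝ (Fin n))‖ ^ 2, by fun_prop⟩ : C(UBall n, ℝ)))
        = fun y => ‖y‖ ^ 2 • (1 : C(UBall n, ℝ)) - (2 : ℝ) • ℓ y + n2 := by
      funext y; ext z
      simp [ℓ, n2, norm_sub_sq_real]
    rw [h1]
    exact ((hn2.smul contDiff_const).sub (hℓ.const_smul (2 : ℝ))).add contDiff_const
  unfold kerC
  refine ContDiffAt.mul ?_ ?_
  · exact ((hn2.smul contDiff_const).sub contDiff_const).contDiffAt
  · refine ContDiffAt.pow ?_ n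
    have hpos : ∀ z : UBall n, 0 < (⟨fun z => ‖x - (z : EuclideanSpace ℝ (Fin n))‖ ^ 2,
        by fun_prop⟩ : C(UBall n, ℝ)) z := fun z => by
      have := kerC_aux_pos hx z
      simp only [ContinuousMap.coe_mk]; positivity
    obtain ⟨w, hw⟩ : IsUnit (sqrtC (⟨fun z => ‖x - (z : EuclideanSpace ℝ (Fin n))‖ ^ 2,
        by fun_prop⟩ : C(UBall n, ℝ))) := by
      rw [ContinuousMap.isUnit_iff_forall_ne_zero]
      exact fun z => (Real.sqrt_pos.2 (hpos z)).ne'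
    have h2 := (contDiffAt_sqrtC hpos).comp x hq.contDiffAt
    have h3 := contDiffAt_ringInverse ℝ w (n := ((⊤ : ℕ∞) : WithTop ℕ∞))
    rw [hw] at h3
    exact h3.comp x h2

lemma eventually_one_lt_norm {n : ℕ} {x : EuclideanSpace ℝ (Fin n)} (hx : 1 < ‖x‖) :
    ∀ᶠ y in 𝓝 x, 1 < ‖y‖ :=
  continuous_norm.continuousAt.eventually (lt_mem_nhds hx)

/-- A superposition `Λ (kerC ·)` of Poisson kernels is harmonic: evaluation at each pole is
continuous linear, so the `C(UBall n, ℝ)`-valued Laplacian of `kerC` vanishes pole by pole. -/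
lemma laplacian_comp_kerC {n : ℕ} (Λ : C(UBall n, ℝ) →L[ℝ] ℝ) {x : EuclideanSpace ℝ (Fin n)}
    (hx : 1 < ‖x‖) : laplacian (fun y => Λ (kerC y)) x = 0 := by
  have hc : ContDiffAt ℝ 2 (kerC : EuclideanSpace ℝ (Fin n) → C(UBall n, ℝ)) x :=
    (contDiffAt_kerC hx).of_le (show ((2 : ℕ∞) : WithTop ℕ∞) ≤ _ from WithTop.coe_le_coe.2 le_top)
  have hgen : ∀ Λ : C(UBall n, ℝ) →L[ℝ] ℝ, laplacian (fun y => Λ (kerC y)) x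
      = Λ (∑ i : Fin n, iteratedFDeriv ℝ 2 (kerC : EuclideanSpace ℝ (Fin n) → C(UBall n, ℝ)) x
          ![EuclideanSpace.single i 1, EuclideanSpace.single i 1]) := by
    intro Λ
    have := Λ.iteratedFDeriv_comp_left hc (i := 2) le_rfl
    unfold laplacian
    rw [map_sum]
    refine Finset.sum_congr rfl fun i _ => ?_
    rw [show (fun y => Λ (kerC y)) = Λ ∘ (kerC : EuclideanSpace ℝ (Fin n) → C(UBall n, ℝ)) from rfl,
      this]
    rfl
  rw [hgen]
  convert map_zero Λ
  ext z
  have h1 := hgen (ContinuousMap.evalCLM ℝ z)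
  have h2 : (fun y => ContinuousMap.evalCLM ℝ z (kerC y))
      =ᶠ[𝓝 x] fun y => poissonKer y (z : EuclideanSpace ℝ (Fin n)) := by
    filter_upwards [eventually_one_lt_norm hx] with y hy
    exact kerC_apply hy z
  rw [laplacian_congr h2, laplacian_poissonKer
    (sub_ne_zero.1 (norm_pos_iff.1 (kerC_aux_pos hx z)))] at h1
  exact h1.symm

/-- Superpositions of Poisson kernels with poles `Y ω` in the closed unit ball and an integrable
weight `w` are smooth and harmonic outside the closed unit ball. -/
theorem superposition {n : ℕ} {Ω : Type*} [MeasurableSpace Ω] {μ : Measure Ω}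
    {Y : Ω → EuclideanSpace ℝ (Fin n)} (hY : Measurable Y) (hY1 : ∀ᵐ ω ∂μ, ‖Y ω‖ ≤ 1)
    {w : Ω → ℝ} (hw : Integrable w μ) :
    (∀ x : EuclideanSpace ℝ (Fin n), 1 < ‖x‖ → Integrable (fun ω => poissonKer x (Y ω) * w ω) μ) ∧
    (∀ x : EuclideanSpace ℝ (Fin n), 1 < ‖x‖ →
      ContDiffAt ℝ (⊤ : ℕ∞) (fun x => ∫ ω, poissonKer x (Y ω) * w ω ∂μ) x) ∧
    (∀ x : EuclideanSpace ℝ (Fin n), 1 < ‖x‖ →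
      laplacian (fun x => ∫ ω, poissonKer x (Y ω) * w ω ∂μ) x = 0) := by
  classical
  let Y' : Ω → UBall n := fun ω => ⟨if ‖Y ω‖ ≤ 1 then Y ω else 0, by
    split_ifs with h
    · exact mem_closedBall_zero_iff.2 h
    · simp⟩
  have hms : MeasurableSet {ω | ‖Y ω‖ ≤ 1} := measurableSet_le hY.norm measurable_const
  have hY' : Measurable Y' := (Measurable.ite hms hY measurable_const).subtype_mk
  have hYY : ∀ᵐ ω ∂μ, (Y' ω : EuclideanSpace ℝ (Fin n)) = Y ω := by
    filter_upwards [hY1] with ω h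
    simp [Y', h]
  have hint : ∀ g : C(UBall n, ℝ), Integrable (fun ω => g (Y' ω) * w ω) μ := fun g =>
    hw.bdd_mul (c := ‖g‖) (g.continuous.measurable.comp hY').aestronglyMeasurable
      (Eventually.of_forall fun ω => g.norm_coe_le_norm _)
  let Λ : C(UBall n, ℝ) →L[ℝ] ℝ := LinearMap.mkContinuous
    { toFun := fun g => ∫ ω, g (Y' ω) * w ω ∂μ
      map_add' := fun g g' => by
        simp only [ContinuousMap.add_apply, add_mul]
        exact integral_add (hint g) (hint g')
      map_smul' := fun c g => by
        simp only [ContinuousMap.smul_apply, smul_eq_mul, mul_assoc, integral_const_mul,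
          RingHom.id_apply] }
    (∫ ω, ‖w ω‖ ∂μ) (fun g => by
      change ‖∫ ω, g (Y' ω) * w ω ∂μ‖ ≤ _
      rw [mul_comm, ← integral_const_mul]
      refine norm_integral_le_of_norm_le (hw.norm.const_mul _) (Eventually.of_forall fun ω => ?_)
      rw [norm_mul]
      exact mul_le_mul_of_nonneg_right (g.norm_coe_le_norm _) (norm_nonneg _))
  have hpk : ∀ x : EuclideanSpace ℝ (Fin n), 1 < ‖x‖ →
      (fun ω => kerC x (Y' ω) * w ω) =ᵐ[μ] fun ω => poissonKer x (Y ω) * w ω := by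
    intro x hx
    filter_upwards [hYY] with ω h
    rw [kerC_apply hx, h]
  have hF : ∀ x : EuclideanSpace ℝ (Fin n), 1 < ‖x‖ →
      (fun x => ∫ ω, poissonKer x (Y ω) * w ω ∂μ) =ᶠ[𝓝 x] fun x => Λ (kerC x) := by
    intro x hx
    filter_upwards [eventually_one_lt_norm hx] with y hy
    exact (integral_congr_ae (hpk y hy)).symm
  refine ⟨fun x hx => (hint (kerC x)).congr (hpk x hx), fun x hx => ?_, fun x hx => ?_⟩
  · exact (Λ.contDiff.contDiffAt.comp x (contDiffAt_kerC hx)).congr_of_eventuallyEq (hF x hx)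
  · rw [laplacian_congr (hF x hx)]
    exact laplacian_comp_kerC Λ hx

/-! ### A rotation-invariant measure on the sphere and the mass of the kernel -/

/-- A rotation-invariant measure on the unit sphere, obtained by radially projecting the
Lebesgue measure of the punctured unit ball. -/
lemma exists_sphereMeasure (n : ℕ) (hn : 1 ≤ n) :
    ∃ σ : Measure (EuclideanSpace ℝ (Fin n)), IsFiniteMeasure σ ∧ σ ≠ 0 ∧
      (∀ᵐ y ∂σ, ‖y‖ = 1) ∧
      ∀ L : EuclideanSpace ℝ (Fin n) ≃ₗᵢ[ℝ] EuclideanSpace ℝ (Fin n), σ.map L = σ := by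
  have : Nonempty (Fin n) := ⟨⟨0, hn⟩⟩
  set B : Set (EuclideanSpace ℝ (Fin n)) := {z | ‖z‖ < 1 ∧ z ≠ 0} with hB
  have hBo : IsOpen B := (isOpen_lt continuous_norm continuous_const).inter isOpen_ne
  have hBsub : B ⊆ Metric.ball 0 1 := fun z hz => mem_ball_zero_iff.2 hz.1
  have hBne : B.Nonempty := by
    obtain ⟨e, he⟩ := exists_norm_eq (EuclideanSpace ℝ (Fin n)) (c := 1 / 2) (by norm_num)
    exact ⟨e, by rw [he]; norm_num, fun h => by rw [h, norm_zero] at he; norm_num at he⟩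
  have hBfin : volume B ≠ ⊤ := ((measure_mono hBsub).trans_lt measure_ball_lt_top).ne
  have hBpos : volume B ≠ 0 := (hBo.measure_pos volume hBne).ne'
  let N : EuclideanSpace ℝ (Fin n) → EuclideanSpace ℝ (Fin n) := fun z => ‖z‖⁻¹ • z
  have hN : Measurable N := by fun_prop
  have : IsFiniteMeasure (volume.restrict B) := ⟨by simpa using hBfin.lt_top⟩
  refine ⟨(volume.restrict B).map N, inferInstance, ?_, ?_, ?_⟩
  · rw [Ne, Measure.map_eq_zero_iff hN.aemeasurable, Measure.restrict_eq_zero]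
    exact hBpos
  · rw [ae_map_iff hN.aemeasurable (measurableSet_eq_fun measurable_norm measurable_const)]
    filter_upwards [ae_restrict_mem hBo.measurableSet] with z hz
    have : ‖z‖ ≠ 0 := norm_ne_zero_iff.2 hz.2
    simp [N, norm_smul, this]
  · intro L
    have hL : Measurable L := L.continuous.measurable
    have hpre : L ⁻¹' B = B := by
      ext z; simp [hB]
    have hLB : (volume.restrict B).map L = volume.restrict B := by
      have := (L.measurePreserving.restrict_preimage hBo.measurableSet).map_eq
      rwa [hpre] at this
    rw [Measure.map_map hL hN]
    have hc : L ∘ N = N ∘ L := by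
      funext z; simp [N]
    rw [hc, ← Measure.map_map hN hL, hLB]

/-- The exterior Poisson integral of the constant `1` is a multiple of `‖x‖ ^ (2 - n)`. It is
radial, harmonic and vanishes at infinity; in the variable `q = ‖x‖ ^ 2` harmonicity reads
`(q ^ (n / 2) * G' q)' = 0`. -/
lemma exists_mass {n : ℕ} (hn : 5 ≤ n) {σ : Measure (EuclideanSpace ℝ (Fin n))}
    [IsFiniteMeasure σ] (h0 : σ ≠ 0) (h1 : ∀ᵐ y ∂σ, ‖y‖ = 1)
    (hinv : ∀ L : EuclideanSpace ℝ (Fin n) ≃ₗᵢ[ℝ] EuclideanSpace ℝ (Fin n), σ.map L = σ) :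
    ∃ a : ℝ, 0 < a ∧ ∀ x : EuclideanSpace ℝ (Fin n), 1 < ‖x‖ →
      ∫ y, poissonKer x y ∂σ = a * ‖x‖ ^ (2 - (n : ℝ)) := by
  have : Nonempty (Fin n) := ⟨⟨0, by omega⟩⟩
  obtain ⟨hI, hS, hH⟩ := superposition (μ := σ) (Y := fun y : EuclideanSpace ℝ (Fin n) => y)
    measurable_id (h1.mono fun y hy => hy.le) (integrable_const (1 : ℝ))
  simp only [mul_one] at hI hS hH
  set M : EuclideanSpace ℝ (Fin n) → ℝ := fun x => ∫ y, poissonKer x y ∂σ with hM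
  set p : ℝ := (n : ℝ) / 2 with hp
  have hp2 : 2 < p := by
    have : (5 : ℝ) ≤ n := by exact_mod_cast hn
    rw [hp]; linarith
  -- rotation invariance, via a reflection exchanging two vectors of equal norm
  have hrad : ∀ x x' : EuclideanSpace ℝ (Fin n), ‖x‖ = ‖x'‖ → M x = M x' := by
    intro x x' hxx
    set L := Submodule.reflection (ℝ ∙ (x - x'))ᗮ
    have hLx : L x = x' := Submodule.reflection_sub hxx
    have : M x' = ∫ y, poissonKer x' y ∂(σ.map L) := by rw [hinv L]
    have hmap := L.toHomeomorph.measurableEmbedding.integral_map (μ := σ)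
      (fun y => poissonKer x' y)
    rw [this]
    refine Eq.trans ?_ hmap.symm
    refine integral_congr_ae (Eventually.of_forall fun y => ?_)
    change poissonKer x y = poissonKer x' (L y)
    unfold poissonKer
    rw [← hLx, ← map_sub, L.norm_map, L.norm_map, L.norm_map]
  obtain ⟨e, he⟩ := exists_norm_eq (EuclideanSpace ℝ (Fin n)) (c := 1) (by norm_num)
  set G : ℝ → ℝ := fun q => M (√q • e) with hG
  have hMG : ∀ x, M x = G (‖x‖ ^ 2) := fun x => hrad _ _ (by
    rw [norm_smul, he, Real.sqrt_sq (norm_nonneg x)]; simp)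
  have hnorm : ∀ q : ℝ, ‖√q • e‖ = √q := fun q => by
    rw [norm_smul, he, Real.norm_of_nonneg (Real.sqrt_nonneg q), mul_one]
  have hgt : ∀ q : ℝ, 1 < q → 1 < ‖√q • e‖ := fun q hq => by
    rw [hnorm]; exact Real.lt_sqrt_of_sq_lt (by simpa using hq)
  have hGs : ∀ q : ℝ, 1 < q → ContDiffAt ℝ (⊤ : ℕ∞) G q := by
    intro q hq
    have hs : ContDiffAt ℝ (⊤ : ℕ∞) (fun q : ℝ => √q • e) q :=
      (Real.contDiffAt_sqrt (by linarith)).smul contDiffAt_const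
    exact ContDiffAt.comp (g := M) q (hS _ (hgt q hq)) hs
  have hGd : ∀ q : ℝ, 1 < q → HasDerivAt G (deriv G q) q := fun q hq =>
    ((hGs q hq).differentiableAt (by simp)).hasDerivAt
  have hGd2 : ∀ q : ℝ, 1 < q → HasDerivAt (deriv G) (deriv (deriv G) q) q := by
    intro q hq
    have h2 : ContDiffAt ℝ 2 G q :=
      (hGs q hq).of_le (show ((2 : ℕ∞) : WithTop ℕ∞) ≤ _ from WithTop.coe_le_coe.2 le_top)
    have h3 : ContDiffAt ℝ 1 (fun y => fderiv ℝ G y 1) q :=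
      (h2.fderiv_right (m := 1) (by norm_num)).clm_apply contDiffAt_const
    have h4 : (fun y => fderiv ℝ G y 1) = deriv G := by funext y; simp
    rw [h4] at h3
    exact (h3.differentiableAt (by simp)).hasDerivAt
  have hode : ∀ q : ℝ, 1 < q → q * deriv (deriv G) q + p * deriv G q = 0 := by
    intro q hq
    have hx := hgt q hq
    have hsq : ‖√q • e‖ ^ 2 = q := by rw [hnorm, Real.sq_sqrt (by linarith)]
    have hMG' : M = fun x => G (‖x‖ ^ 2) := funext hMG
    have hl := hH _ hx
    have hc : ContDiffAt ℝ 2 M (√q • e) :=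
      (hS _ hx).of_le (show ((2 : ℕ∞) : WithTop ℕ∞) ≤ _ from WithTop.coe_le_coe.2 le_top)
    rw [hMG'] at hl hc
    rw [laplacian_radial (G' := deriv G) (G'' := deriv (deriv G) q) hc
      (by rw [hsq]; filter_upwards [lt_mem_nhds hq] with r hr using hGd r hr)
      (by rw [hsq]; exact hGd2 q hq), hsq] at hl
    have : (n : ℝ) = 2 * p := by rw [hp]; ring
    rw [this] at hl
    linarith
  have hconst : ∀ F : ℝ → ℝ, (∀ q, 1 < q → HasDerivAt F 0 q) → ∀ q, 1 < q → F q = F 2 := by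
    intro F hF q hq
    exact isOpen_Ioi.is_const_of_deriv_eq_zero (s := Ioi (1 : ℝ)) isPreconnected_Ioi
      (fun r hr => (hF r hr).differentiableAt.differentiableWithinAt)
      (fun r hr => (hF r hr).deriv) hq (by norm_num : (2 : ℝ) ∈ Ioi (1 : ℝ))
  obtain ⟨c, hc⟩ : ∃ c : ℝ, ∀ q, 1 < q → deriv G q = c * q ^ (-p) := by
    refine ⟨2 ^ p * deriv G 2, fun q hq => ?_⟩
    have hq0 : 0 < q := by linarith
    have := hconst (fun q => q ^ p * deriv G q) (fun r hr => by
      have hr0 : 0 < r := by linarith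
      have := (Real.hasDerivAt_rpow_const (p := p) (Or.inl hr0.ne')).mul (hGd2 r hr)
      refine this.congr_deriv ?_
      have e1 : r ^ p = r ^ (p - 1) * r := by rw [Real.rpow_sub_one hr0.ne']; field_simp
      rw [e1]
      linear_combination r ^ (p - 1) * hode r hr) q hq
    rw [← this, Real.rpow_neg hq0.le]
    have : q ^ p ≠ 0 := (Real.rpow_pos_of_pos hq0 p).ne'
    field_simp
  set a : ℝ := -c / (p - 1) with ha
  have hGb : ∀ q, 1 < q → G q - a * q ^ (1 - p) = G 2 - a * 2 ^ (1 - p) := by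
    refine hconst (fun q => G q - a * q ^ (1 - p)) (fun r hr => ?_)
    have hr0 : 0 < r := by linarith
    have := (hGd r hr).sub
      ((Real.hasDerivAt_rpow_const (p := 1 - p) (Or.inl hr0.ne')).const_mul a)
    refine this.congr_deriv ?_
    rw [hc r hr, show 1 - p - 1 = -p by ring, ha]
    have : p - 1 ≠ 0 := by linarith
    field_simp; ring
  have hdecay : ∀ q : ℝ, 4 < q → G q ≤ 4 ^ p * (σ.real univ) * q ^ (1 - p) := by
    intro q hq
    have hq0 : 0 < q := by linarith
    have hs2 : 2 < √q := Real.lt_sqrt_of_sq_lt (by linarith)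
    have hb : ∀ᵐ y ∂σ, poissonKer (√q • e) y ≤ 4 ^ p * q ^ (1 - p) := by
      filter_upwards [h1] with y hy
      unfold poissonKer
      rw [hnorm, hy, Real.sq_sqrt hq0.le]
      have h2 : √q / 2 ≤ ‖√q • e - y‖ := by
        have := norm_sub_norm_le (√q • e) y
        rw [hnorm, hy] at this
        linarith
      have h3 : q / 4 ≤ ‖√q • e - y‖ ^ 2 := by
        have := pow_le_pow_left₀ (by positivity) h2 2
        rw [div_pow, Real.sq_sqrt hq0.le] at this
        linarith
      have h4 : (‖√q • e - y‖ ^ 2) ^ (-p) ≤ (q / 4) ^ (-p) :=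
        Real.rpow_le_rpow_of_nonpos (by positivity) h3 (by linarith)
      have h5 : q * (q / 4) ^ (-p) = 4 ^ p * q ^ (1 - p) := by
        rw [Real.div_rpow hq0.le (by norm_num), Real.rpow_sub hq0, Real.rpow_one,
          Real.rpow_neg hq0.le, Real.rpow_neg (by norm_num)]
        field_simp
      calc (q - 1 ^ 2) * (‖√q • e - y‖ ^ 2) ^ (-p) ≤ q * (q / 4) ^ (-p) :=
            mul_le_mul (by linarith) h4 (by positivity) hq0.le
        _ = _ := h5
    have := integral_mono_ae (hI _ (hgt q (by linarith))) (integrable_const _) hb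
    rw [integral_const, smul_eq_mul] at this
    change M (√q • e) ≤ _
    linarith
  have hpos : ∀ q : ℝ, 1 < q → 0 < G q := by
    intro q hq
    have hp0 : ∀ᵐ y ∂σ, 0 < poissonKer (√q • e) y := by
      filter_upwards [h1] with y hy
      exact poissonKer_pos (by rw [hy]; exact hgt q hq)
    have hnn : 0 ≤ᵐ[σ] fun y => poissonKer (√q • e) y := hp0.mono fun y hy => hy.le
    refine lt_of_le_of_ne (integral_nonneg_of_ae hnn) fun h => h0 ?_
    have h2 := (integral_eq_zero_iff_of_nonneg_ae hnn (hI _ (hgt q hq))).1 h.symm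
    rw [← ae_eq_bot, ← empty_mem_iff_bot]
    filter_upwards [hp0, h2] with y hy hy2
    rw [hy2] at hy
    exact lt_irrefl _ hy
  have hlim0 : Tendsto (fun q : ℝ => q ^ (1 - p)) atTop (𝓝 0) := by
    have := tendsto_rpow_neg_atTop (y := p - 1) (by linarith)
    simpa using this
  have hGlim : Tendsto G atTop (𝓝 0) := by
    have h2 := hlim0.const_mul (4 ^ p * σ.real univ)
    rw [mul_zero] at h2
    refine squeeze_zero' ?_ ?_ h2
    · filter_upwards [eventually_gt_atTop 1] with q hq using (hpos q hq).le
    · filter_upwards [eventually_gt_atTop 4] with q hq using hdecay q hq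
  have hb0 : G 2 - a * 2 ^ (1 - p) = 0 := by
    have h2 : Tendsto (fun q => G q - a * q ^ (1 - p)) atTop (𝓝 (0 - a * 0)) :=
      hGlim.sub (hlim0.const_mul a)
    have h3 : Tendsto (fun q => G q - a * q ^ (1 - p)) atTop (𝓝 (G 2 - a * 2 ^ (1 - p))) := by
      refine tendsto_const_nhds.congr' ?_
      filter_upwards [eventually_gt_atTop 1] with q hq using (hGb q hq).symm
    simpa using tendsto_nhds_unique h3 h2
  have hfin : ∀ q, 1 < q → G q = a * q ^ (1 - p) := fun q hq => by
    have := hGb q hq; linarith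
  refine ⟨a, ?_, fun x hx => ?_⟩
  · have h2 := hpos 2 (by norm_num)
    rw [hfin 2 (by norm_num)] at h2
    exact pos_of_mul_pos_left h2 (by positivity)
  · change M x = _
    rw [hMG, hfin _ (by nlinarith), ← Real.rpow_natCast, ← Real.rpow_mul (norm_nonneg x)]
    congr 2
    rw [hp]; push_cast; ring

/-! ### Poisson extension of continuous boundary data -/

/-- Exterior Poisson extension: continuous boundary data have a continuous extension to
`‖x‖ ≥ 1` which is harmonic for `‖x‖ > 1` and decays like `‖x‖ ^ (2 - n)`. The representation
by the Poisson integral is kept in the conclusion. -/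
theorem exists_poissonExt {n : ℕ} {σ : Measure (EuclideanSpace ℝ (Fin n))}
    [IsFiniteMeasure σ] (h1 : ∀ᵐ y ∂σ, ‖y‖ = 1) {a : ℝ} (ha : 0 < a)
    (hmass : ∀ x : EuclideanSpace ℝ (Fin n), 1 < ‖x‖ →
      ∫ y, poissonKer x y ∂σ = a * ‖x‖ ^ (2 - (n : ℝ)))
    {k : EuclideanSpace ℝ (Fin n) → ℝ} (hk : Continuous k) {S : ℝ} (hS0 : 0 ≤ S)
    (hS : ∀ y, ‖y‖ = 1 → |k y| ≤ S) :
    ∃ v : EuclideanSpace ℝ (Fin n) → ℝ,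
      (∀ x, ‖x‖ = 1 → v x = k x) ∧
      (∀ x, 1 < ‖x‖ → v x = a⁻¹ * ∫ y, poissonKer x y * k y ∂σ) ∧
      (∀ x, 1 ≤ ‖x‖ → |v x| ≤ S * ‖x‖ ^ (2 - (n : ℝ))) ∧
      ContinuousOn v {x | 1 ≤ ‖x‖} ∧
      (∀ x, 1 < ‖x‖ → ContDiffAt ℝ (⊤ : ℕ∞) v x) ∧
      (∀ x, 1 < ‖x‖ → laplacian v x = 0) := by
  have hki : Integrable k σ := Integrable.of_bound hk.aestronglyMeasurable S
    (h1.mono fun y hy => hS y hy)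
  obtain ⟨hI, hC, hL⟩ := superposition (μ := σ) (Y := fun y : EuclideanSpace ℝ (Fin n) => y)
    measurable_id (h1.mono fun y hy => hy.le) hki
  obtain ⟨hI1, -, -⟩ := superposition (μ := σ) (Y := fun y : EuclideanSpace ℝ (Fin n) => y)
    measurable_id (h1.mono fun y hy => hy.le) (integrable_const (1 : ℝ))
  simp only [mul_one] at hI1
  set v : EuclideanSpace ℝ (Fin n) → ℝ := fun x =>
    if ‖x‖ ≤ 1 then k x else a⁻¹ * ∫ y, poissonKer x y * k y ∂σ with hv
  have hv1 : ∀ x, ‖x‖ = 1 → v x = k x := fun x hx => if_pos hx.le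
  have hv2 : ∀ x, 1 < ‖x‖ → v x = a⁻¹ * ∫ y, poissonKer x y * k y ∂σ :=
    fun x hx => if_neg hx.not_ge
  have hev : ∀ x, 1 < ‖x‖ → v =ᶠ[𝓝 x] fun x => a⁻¹ * ∫ y, poissonKer x y * k y ∂σ := by
    intro x hx
    filter_upwards [eventually_one_lt_norm hx] with y hy using hv2 y hy
  have hsm : ∀ x, 1 < ‖x‖ → ContDiffAt ℝ (⊤ : ℕ∞) v x := fun x hx =>
    (contDiffAt_const.mul (hC x hx)).congr_of_eventuallyEq (hev x hx)
  have h2le : (2 : WithTop ℕ∞) ≤ ((⊤ : ℕ∞) : WithTop ℕ∞) :=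
    show ((2 : ℕ∞) : WithTop ℕ∞) ≤ _ from WithTop.coe_le_coe.2 le_top
  refine ⟨v, hv1, hv2, ?_, ?_, hsm, ?_⟩
  · intro x hx
    rcases hx.eq_or_lt with hx | hx
    · rw [hv1 x hx.symm, ← hx, Real.one_rpow, mul_one]
      exact hS x hx.symm
    · rw [hv2 x hx, abs_mul, abs_of_pos (inv_pos.2 ha)]
      have hb : |∫ y, poissonKer x y * k y ∂σ| ≤ ∫ y, S * poissonKer x y ∂σ := by
        rw [← Real.norm_eq_abs]
        refine norm_integral_le_of_norm_le ((hI1 x hx).const_mul S) ?_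
        filter_upwards [h1] with y hy
        have h0 : 0 ≤ poissonKer x y := poissonKer_nonneg (by rw [hy]; exact hx.le)
        rw [norm_mul, Real.norm_of_nonneg h0, mul_comm]
        exact mul_le_mul_of_nonneg_right (hS y hy) h0
      rw [integral_const_mul, hmass x hx] at hb
      calc a⁻¹ * |∫ y, poissonKer x y * k y ∂σ|
          ≤ a⁻¹ * (S * (a * ‖x‖ ^ (2 - (n : ℝ)))) := by gcongr
        _ = _ := by field_simp
  · intro ξ hξ
    rcases (show 1 ≤ ‖ξ‖ from hξ).eq_or_lt with hξ1 | hξ1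
    swap
    · exact (hsm ξ hξ1).continuousAt.continuousWithinAt
    rw [Metric.continuousWithinAt_iff']
    intro ε' hε'
    set ε : ℝ := ε' / 2 with hε
    have hε0 : 0 < ε := by positivity
    obtain ⟨δ, hδ, hkδ⟩ := Metric.continuousAt_iff.1 (hk.continuousAt (x := ξ)) ε hε0
    set D : ℝ := 2 * S * ((δ / 2) ^ 2) ^ (-((n : ℝ) / 2)) with hD
    have hD0 : 0 ≤ D := by positivity
    set R : EuclideanSpace ℝ (Fin n) → ℝ := fun x =>
      ε * ‖x‖ ^ (2 - (n : ℝ)) + a⁻¹ * (σ.real univ * (D * (‖x‖ ^ 2 - 1))) +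
        |k ξ| * |‖x‖ ^ (2 - (n : ℝ)) - 1| with hR
    have hRξ : R ξ = ε := by simp [hR, ← hξ1]
    have hRc : ContinuousAt R ξ := by
      have : ContinuousAt (fun x : EuclideanSpace ℝ (Fin n) => ‖x‖ ^ (2 - (n : ℝ))) ξ :=
        continuous_norm.continuousAt.rpow_const (Or.inl (by rw [← hξ1]; norm_num))
      simp only [hR]
      fun_prop
    have hRlt : ∀ᶠ x in 𝓝[{x | 1 ≤ ‖x‖}] ξ, R x < ε' :=
      (hRc.eventually (gt_mem_nhds (by rw [hRξ, hε]; linarith))).filter_mono nhdsWithin_le_nhds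
    filter_upwards [hRlt, self_mem_nhdsWithin,
      nhdsWithin_le_nhds (Metric.ball_mem_nhds ξ (half_pos hδ))] with x hxR hx hxb
    refine lt_of_le_of_lt ?_ hxR
    rw [Real.dist_eq, hv1 ξ hξ1.symm]
    have hxb : dist x ξ < δ / 2 := hxb
    rcases (show 1 ≤ ‖x‖ from hx).eq_or_lt with hx1 | hx1
    · have := hkδ (show dist x ξ < δ by linarith)
      rw [Real.dist_eq] at this
      rw [hv1 x hx1.symm]
      simp only [hR, ← hx1]
      simpa using this.le
    have hx2 : 0 ≤ ‖x‖ ^ 2 - 1 := by nlinarith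
    -- poles near `ξ` contribute little by continuity of `k`, the others since the kernel is small
    have hpt : ∀ᵐ y ∂σ, ‖poissonKer x y * (k y - k ξ)‖
        ≤ ε * poissonKer x y + D * (‖x‖ ^ 2 - 1) := by
      filter_upwards [h1] with y hy
      have h0 : 0 ≤ poissonKer x y := poissonKer_nonneg (by rw [hy]; exact hx1.le)
      rw [norm_mul, Real.norm_of_nonneg h0]
      by_cases hyd : dist y ξ < δ
      · have := (hkδ hyd).le
        rw [Real.dist_eq] at this
        have h3 := mul_le_mul_of_nonneg_left this h0
        have h4 : 0 ≤ D * (‖x‖ ^ 2 - 1) := by positivity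
        rw [Real.norm_eq_abs]
        linarith
      · have h3 : δ / 2 ≤ ‖x - y‖ := by
          have := dist_triangle y x ξ
          rw [dist_eq_norm y x, norm_sub_rev] at this
          linarith
        have h4 : (‖x - y‖ ^ 2) ^ (-((n : ℝ) / 2)) ≤ ((δ / 2) ^ 2) ^ (-((n : ℝ) / 2)) :=
          Real.rpow_le_rpow_of_nonpos (by positivity) (by gcongr)
            (by have : (0 : ℝ) ≤ n := n.cast_nonneg
                linarith)
        have h5 : ‖k y - k ξ‖ ≤ 2 * S := by
          have e1 := hS y hy
          have e2 := hS ξ hξ1.symm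
          have e3 := norm_sub_le (k y) (k ξ)
          rw [Real.norm_eq_abs (k y), Real.norm_eq_abs (k ξ)] at e3
          linarith
        have h6 : poissonKer x y ≤ (‖x‖ ^ 2 - 1) * ((δ / 2) ^ 2) ^ (-((n : ℝ) / 2)) := by
          unfold poissonKer
          rw [hy, one_pow]
          gcongr
        have h7 : poissonKer x y * ‖k y - k ξ‖ ≤
            (‖x‖ ^ 2 - 1) * ((δ / 2) ^ 2) ^ (-((n : ℝ) / 2)) * (2 * S) :=
          mul_le_mul h6 h5 (norm_nonneg _) (by positivity)
        have h8 : 0 ≤ ε * poissonKer x y := by positivity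
        rw [hD]
        linarith
    have hint := norm_integral_le_of_norm_le
      (((hI1 x hx1).const_mul ε).add (integrable_const (D * (‖x‖ ^ 2 - 1)))) hpt
    have e1 : ∫ y, poissonKer x y * (k y - k ξ) ∂σ
        = (∫ y, poissonKer x y * k y ∂σ) - a * ‖x‖ ^ (2 - (n : ℝ)) * k ξ := by
      simp only [mul_sub]
      rw [integral_sub (hI x hx1) ((hI1 x hx1).mul_const _), integral_mul_const, hmass x hx1]
    have e2 : ∫ y, (ε * poissonKer x y + D * (‖x‖ ^ 2 - 1)) ∂σ
        = ε * (a * ‖x‖ ^ (2 - (n : ℝ))) + σ.real univ * (D * (‖x‖ ^ 2 - 1)) := by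
      rw [integral_add ((hI1 x hx1).const_mul ε) (integrable_const _), integral_const_mul,
        hmass x hx1, integral_const, smul_eq_mul]
    have hint' : |(∫ y, poissonKer x y * k y ∂σ) - a * ‖x‖ ^ (2 - (n : ℝ)) * k ξ| ≤
        ε * (a * ‖x‖ ^ (2 - (n : ℝ))) + σ.real univ * (D * (‖x‖ ^ 2 - 1)) := by
      rw [← e1, ← e2]; exact hint
    have e3 : v x - k ξ = a⁻¹ * ((∫ y, poissonKer x y * k y ∂σ) - a * ‖x‖ ^ (2 - (n : ℝ)) * k ξ)
        + k ξ * (‖x‖ ^ (2 - (n : ℝ)) - 1) := by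
      rw [hv2 x hx1]; field_simp; ring
    have ha' : 0 < a⁻¹ := inv_pos.2 ha
    have e4 : a⁻¹ * (ε * (a * ‖x‖ ^ (2 - (n : ℝ)))) = ε * ‖x‖ ^ (2 - (n : ℝ)) := by
      field_simp
    calc |v x - k ξ| ≤ a⁻¹ * |(∫ y, poissonKer x y * k y ∂σ) - a * ‖x‖ ^ (2 - (n : ℝ)) * k ξ|
          + |k ξ| * |‖x‖ ^ (2 - (n : ℝ)) - 1| := by
          rw [e3]
          refine (abs_add_le _ _).trans ?_
          rw [abs_mul, abs_mul, abs_of_pos ha']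
      _ ≤ a⁻¹ * (ε * (a * ‖x‖ ^ (2 - (n : ℝ))) + σ.real univ * (D * (‖x‖ ^ 2 - 1)))
          + |k ξ| * |‖x‖ ^ (2 - (n : ℝ)) - 1| := by gcongr
      _ = R x := by rw [mul_add, e4]
  · intro x hx
    rw [laplacian_congr (hev x hx), laplacian_const_mul _ ((hC x hx).of_le h2le), hL x hx, mul_zero]

/-! ### The Euler equation `x · ∇W + (n / 2) W = v / 4` -/

/-- For the Poisson extension `v`, the Euler equation `x · ∇W + (n / 2) W = v / 4` has a
harmonic solution `W x = -(1 / 4) ∫₀¹ s ^ (-n / 2 - 1) v (x / s) ds`, with the same decay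
as `v`. The integral is itself a superposition of Poisson kernels with poles `s • y`, which is why
`W` is smooth and harmonic, while its derivative along rays is computed by rescaling `s`. -/
theorem exists_eulerSolution {n : ℕ} (hn : 5 ≤ n) {σ : Measure (EuclideanSpace ℝ (Fin n))}
    [IsFiniteMeasure σ] (h1 : ∀ᵐ y ∂σ, ‖y‖ = 1) {a : ℝ}
    {k : EuclideanSpace ℝ (Fin n) → ℝ} (hk : Continuous k) {S : ℝ} (hS0 : 0 ≤ S)
    (hS : ∀ y, ‖y‖ = 1 → |k y| ≤ S) {v : EuclideanSpace ℝ (Fin n) → ℝ}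
    (hvrep : ∀ x, 1 < ‖x‖ → v x = a⁻¹ * ∫ y, poissonKer x y * k y ∂σ)
    (hvb : ∀ x, 1 ≤ ‖x‖ → |v x| ≤ S * ‖x‖ ^ (2 - (n : ℝ)))
    (hvc : ContinuousOn v {x | 1 ≤ ‖x‖}) :
    ∃ W : EuclideanSpace ℝ (Fin n) → ℝ,
      ContinuousOn W {x | 1 ≤ ‖x‖} ∧
      (∀ x, 1 ≤ ‖x‖ → |W x| ≤ S / 2 * ‖x‖ ^ (2 - (n : ℝ))) ∧
      (∀ x, 1 < ‖x‖ → ContDiffAt ℝ (⊤ : ℕ∞) W x) ∧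
      (∀ x, 1 < ‖x‖ → laplacian W x = 0) ∧
      (∀ x, 1 < ‖x‖ → fderiv ℝ W x x = -((n : ℝ) / 2) * W x + v x / 4) := by
  set p : ℝ := (n : ℝ) / 2 with hp
  have hn5 : (5 : ℝ) ≤ n := by exact_mod_cast hn
  have hnp : (n : ℝ) = 2 * p := by rw [hp]; ring
  have hp2 : 5 / 2 ≤ p := by linarith
  set f : EuclideanSpace ℝ (Fin n) → ℝ → ℝ := fun x s => s ^ (-p - 1) * v (s⁻¹ • x) with hf
  set W : EuclideanSpace ℝ (Fin n) → ℝ := fun x => -(1 / 4) * ∫ s in (0 : ℝ)..1, f x s with hW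
  have hnorm : ∀ (x : EuclideanSpace ℝ (Fin n)) (s : ℝ), 0 < s → ‖s⁻¹ • x‖ = s⁻¹ * ‖x‖ :=
    fun x s hs => by rw [norm_smul, Real.norm_of_nonneg (inv_nonneg.2 hs.le)]
  have hnorm1 : ∀ (x : EuclideanSpace ℝ (Fin n)) (s : ℝ), 0 < s → s ≤ ‖x‖ → 1 ≤ ‖s⁻¹ • x‖ := by
    intro x s hs hsx
    rw [hnorm x s hs, inv_mul_eq_div, one_le_div hs]; exact hsx
  have hfb : ∀ (x : EuclideanSpace ℝ (Fin n)) (s : ℝ), 1 ≤ ‖x‖ → s ∈ Ioc (0 : ℝ) 1 →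
      ‖f x s‖ ≤ S * ‖x‖ ^ (2 - (n : ℝ)) * s ^ (p - 3) := by
    intro x s hx hs
    have h2 := hvb _ (hnorm1 x s hs.1 (hs.2.trans hx))
    have h3 : s ^ (-p - 1) * (s⁻¹ * ‖x‖) ^ (2 - (n : ℝ)) = ‖x‖ ^ (2 - (n : ℝ)) * s ^ (p - 3) := by
      rw [Real.mul_rpow (inv_nonneg.2 hs.1.le) (norm_nonneg x), Real.inv_rpow hs.1.le,
        ← Real.rpow_neg hs.1.le, ← mul_assoc, ← Real.rpow_add hs.1, mul_comm]
      congr 2; rw [hnp]; ring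
    rw [hnorm x s hs.1] at h2
    have h4 : 0 ≤ s ^ (-p - 1) := Real.rpow_nonneg hs.1.le _
    rw [hf, norm_mul, Real.norm_of_nonneg h4, Real.norm_eq_abs]
    calc s ^ (-p - 1) * |v (s⁻¹ • x)| ≤ s ^ (-p - 1) * (S * (s⁻¹ * ‖x‖) ^ (2 - (n : ℝ))) := by
          gcongr
      _ = S * (s ^ (-p - 1) * (s⁻¹ * ‖x‖) ^ (2 - (n : ℝ))) := by ring
      _ = _ := by rw [h3]; ring
  have hfc : ∀ x : EuclideanSpace ℝ (Fin n), ContinuousOn (f x) (Ioc 0 ‖x‖) := by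
    intro x
    refine ContinuousOn.mul ?_ (hvc.comp ?_ ?_)
    · exact continuousOn_id.rpow_const fun s hs => Or.inl hs.1.ne'
    · exact (continuousOn_id.inv₀ fun s hs => hs.1.ne').smul continuousOn_const
    · exact fun s hs => hnorm1 x s hs.1 hs.2
  have hsub : ∀ x : EuclideanSpace ℝ (Fin n), 1 ≤ ‖x‖ → Ioc (0 : ℝ) 1 ⊆ Ioc 0 ‖x‖ :=
    fun x hx => Ioc_subset_Ioc_right hx
  have hpi : IntervalIntegrable (fun s : ℝ => s ^ (p - 3)) volume 0 1 :=
    intervalIntegral.intervalIntegrable_rpow' (by linarith)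
  have hfm : ∀ x : EuclideanSpace ℝ (Fin n), 1 ≤ ‖x‖ →
      AEStronglyMeasurable (f x) (volume.restrict (uIoc 0 1)) := by
    intro x hx
    rw [uIoc_of_le zero_le_one]
    exact ((hfc x).mono (hsub x hx)).aestronglyMeasurable measurableSet_Ioc
  have hfi : ∀ x : EuclideanSpace ℝ (Fin n), 1 ≤ ‖x‖ →
      IntervalIntegrable (f x) volume 0 1 := by
    intro x hx
    refine (hpi.const_mul (S * ‖x‖ ^ (2 - (n : ℝ)))).mono_fun (hfm x hx) ?_
    rw [uIoc_of_le zero_le_one]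
    filter_upwards [ae_restrict_mem measurableSet_Ioc] with s hs
    exact (hfb x s hx hs).trans (le_abs_self _)
  have hki : Integrable k σ := Integrable.of_bound hk.aestronglyMeasurable S
    (h1.mono fun y hy => hS y hy)
  have hwi : Integrable (fun ω : ℝ × EuclideanSpace ℝ (Fin n) => ω.1 ^ (p - 3) * k ω.2)
      ((volume.restrict (Ioc (0 : ℝ) 1)).prod σ) :=
    ((intervalIntegrable_iff_integrableOn_Ioc_of_le zero_le_one).1 hpi).integrable.mul_prod hki
  have hY1 : ∀ᵐ ω ∂((volume.restrict (Ioc (0 : ℝ) 1)).prod σ), ‖ω.1 • ω.2‖ ≤ 1 := by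
    filter_upwards [Measure.quasiMeasurePreserving_fst.ae (ae_restrict_mem measurableSet_Ioc),
      Measure.quasiMeasurePreserving_snd.ae h1] with ω hω hω'
    rw [norm_smul, hω', Real.norm_of_nonneg hω.1.le, mul_one]
    exact hω.2
  obtain ⟨hI, hC, hL⟩ := superposition
    (Y := fun ω : ℝ × EuclideanSpace ℝ (Fin n) => ω.1 • ω.2) (by fun_prop) hY1 hwi
  have hrep : ∀ x : EuclideanSpace ℝ (Fin n), 1 < ‖x‖ → W x = -(1 / 4) * a⁻¹ *
      ∫ ω, poissonKer x (ω.1 • ω.2) * (ω.1 ^ (p - 3) * k ω.2)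
        ∂((volume.restrict (Ioc (0 : ℝ) 1)).prod σ) := by
    intro x hx
    rw [integral_prod _ (hI x hx), mul_assoc, ← integral_const_mul]
    simp only [hW]
    rw [intervalIntegral.integral_of_le zero_le_one]
    congr 1
    refine setIntegral_congr_fun measurableSet_Ioc fun s hs => ?_
    have hsx : 1 < ‖s⁻¹ • x‖ := by
      rw [hnorm x s hs.1, inv_mul_eq_div, one_lt_div hs.1]
      exact hs.2.trans_lt hx
    have e1 : s ^ (-p - 1) * s ^ ((n : ℝ) - 2) = s ^ (p - 3) := by
      rw [← Real.rpow_add hs.1]; congr 1; rw [hnp]; ring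
    simp only [hf]
    rw [hvrep _ hsx, mul_left_comm, ← integral_const_mul]
    congr 1
    refine integral_congr_ae (Eventually.of_forall fun y => ?_)
    simp only
    rw [poissonKer_inv_smul x y hs.1, ← e1]
    ring
  have hev : ∀ x : EuclideanSpace ℝ (Fin n), 1 < ‖x‖ → W =ᶠ[𝓝 x] fun x => -(1 / 4) * a⁻¹ *
      ∫ ω, poissonKer x (ω.1 • ω.2) * (ω.1 ^ (p - 3) * k ω.2)
        ∂((volume.restrict (Ioc (0 : ℝ) 1)).prod σ) := by
    intro x hx
    filter_upwards [eventually_one_lt_norm hx] with y hy using hrep y hy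
  have hsm : ∀ x, 1 < ‖x‖ → ContDiffAt ℝ (⊤ : ℕ∞) W x := fun x hx =>
    (contDiffAt_const.mul (hC x hx)).congr_of_eventuallyEq (hev x hx)
  have h2le : (2 : WithTop ℕ∞) ≤ ((⊤ : ℕ∞) : WithTop ℕ∞) :=
    show ((2 : ℕ∞) : WithTop ℕ∞) ≤ _ from WithTop.coe_le_coe.2 le_top
  refine ⟨W, ?_, ?_, hsm, ?_, ?_⟩
  · refine continuousOn_const.mul fun x₀ hx₀ => ?_
    refine intervalIntegral.continuousWithinAt_of_dominated_interval
      (bound := fun s => S * s ^ (p - 3)) ?_ ?_ (hpi.const_mul S) ?_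
    · filter_upwards [self_mem_nhdsWithin] with x hx using hfm x hx
    · filter_upwards [self_mem_nhdsWithin] with x hx
      refine Eventually.of_forall fun s hs => ?_
      rw [uIoc_of_le zero_le_one] at hs
      refine (hfb x s hx hs).trans ?_
      have : ‖x‖ ^ (2 - (n : ℝ)) ≤ 1 := Real.rpow_le_one_of_one_le_of_nonpos hx (by linarith)
      have h3 : 0 ≤ s ^ (p - 3) := Real.rpow_nonneg hs.1.le _
      calc S * ‖x‖ ^ (2 - (n : ℝ)) * s ^ (p - 3) ≤ S * 1 * s ^ (p - 3) := by gcongr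
        _ = _ := by ring
    · refine Eventually.of_forall fun s hs => ?_
      rw [uIoc_of_le zero_le_one] at hs
      refine continuousWithinAt_const.mul ?_
      refine ContinuousWithinAt.comp (t := {x | 1 ≤ ‖x‖})
        (hvc _ (hnorm1 x₀ s hs.1 (hs.2.trans hx₀))) ?_ ?_
      · exact (continuous_const_smul s⁻¹).continuousWithinAt
      · exact fun x hx => hnorm1 x s hs.1 (hs.2.trans hx)
  · intro x hx
    have hb : ‖∫ s in (0 : ℝ)..1, f x s‖ ≤
        ∫ s in (0 : ℝ)..1, S * ‖x‖ ^ (2 - (n : ℝ)) * s ^ (p - 3) :=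
      intervalIntegral.norm_integral_le_of_norm_le zero_le_one
        (Eventually.of_forall fun s hs => hfb x s hx hs) (hpi.const_mul _)
    rw [intervalIntegral.integral_const_mul, integral_rpow (Or.inl (by linarith)), Real.one_rpow,
      Real.zero_rpow (by linarith), Real.norm_eq_abs] at hb
    have h3 : (1 - 0) / (p - 3 + 1) ≤ (2 : ℝ) := by
      rw [div_le_iff₀ (by linarith)]; linarith
    have h4 : 0 ≤ S * ‖x‖ ^ (2 - (n : ℝ)) := by positivity
    have h5 := mul_le_mul_of_nonneg_left h3 h4
    rw [hW, abs_mul, abs_neg, abs_of_pos (by norm_num : (0 : ℝ) < 1 / 4)]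
    linarith
  · intro x hx
    rw [laplacian_congr (hev x hx), laplacian_const_mul _ ((hC x hx).of_le h2le), hL x hx, mul_zero]
  · intro x hx
    have hx0 : 0 < ‖x‖ := by linarith
    -- the integral defining `W (r • x)` in terms of `f x`
    have hscale : ∀ r : ℝ, 0 < r →
        W (r • x) = -(1 / 4) * (r ^ (-p) * ∫ s in (0 : ℝ)..r⁻¹, f x s) := by
      intro r hr
      have e1 : ∫ s in (0 : ℝ)..1, f (r • x) s = ∫ s in (0 : ℝ)..1, r ^ (-p - 1) * f x (s / r) := by
        rw [intervalIntegral.integral_of_le zero_le_one, intervalIntegral.integral_of_le zero_le_one]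
        refine setIntegral_congr_fun measurableSet_Ioc fun s hs => ?_
        simp only [hf]
        rw [Real.div_rpow hs.1.le hr.le, inv_div, smul_smul]
        have : r ^ (-p - 1) ≠ 0 := (Real.rpow_pos_of_pos hr _).ne'
        rw [show s⁻¹ * r = r / s by rw [div_eq_inv_mul]]
        field_simp
      have e2 : r ^ (-p) = r ^ (-p - 1) * r := by rw [Real.rpow_sub_one hr.ne']; field_simp
      simp only [hW]
      rw [e1, intervalIntegral.integral_const_mul, intervalIntegral.integral_comp_div _ hr.ne',
        zero_div, one_div r, smul_eq_mul, e2]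
      ring
    have hcx : ContinuousOn (f x) (Ioo 0 ‖x‖) := (hfc x).mono Ioo_subset_Ioc_self
    have h1m : (1 : ℝ) ∈ Ioo 0 ‖x‖ := ⟨one_pos, hx⟩
    have hF : HasDerivAt (fun u => ∫ s in (0 : ℝ)..u, f x s) (f x 1) (1 : ℝ) :=
      intervalIntegral.integral_hasDerivAt_right (hfi x hx.le)
        (hcx.stronglyMeasurableAtFilter isOpen_Ioo 1 h1m)
        (hcx.continuousAt (isOpen_Ioo.mem_nhds h1m))
    have hf1 : f x 1 = v x := by simp [hf]
    rw [hf1] at hF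
    have hinv : HasDerivAt (fun r : ℝ => r⁻¹) (-1) 1 := by
      simpa using hasDerivAt_inv (one_ne_zero (α := ℝ))
    have hF2 : HasDerivAt (fun r : ℝ => ∫ s in (0 : ℝ)..r⁻¹, f x s) (v x * -1) 1 :=
      HasDerivAt.comp_of_eq (h₂ := fun u => ∫ s in (0 : ℝ)..u, f x s) 1 hF hinv (by norm_num)
    have hpow : HasDerivAt (fun r : ℝ => r ^ (-p)) (-p) 1 := by
      simpa using Real.hasDerivAt_rpow_const (x := 1) (p := -p) (Or.inl one_ne_zero)
    have hprod := (hpow.mul hF2).const_mul (-(1 / 4))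
    have hW1 : HasDerivAt (fun r : ℝ => W (r • x)) (-p * W x + v x / 4) 1 := by
      refine (hprod.congr_of_eventuallyEq ?_).congr_deriv ?_
      · filter_upwards [lt_mem_nhds (one_pos (α := ℝ))] with r hr using hscale r hr
      · simp only [hW, inv_one, Real.one_rpow]; ring
    have hW2 : HasDerivAt (fun r : ℝ => W (r • x)) (fderiv ℝ W x x) 1 := by
      have hd : HasFDerivAt W (fderiv ℝ W x) ((1 : ℝ) • x) := by
        rw [one_smul]
        exact ((hsm x hx).differentiableAt (by simp)).hasFDerivAt
      have hl : HasDerivAt (fun r : ℝ => r • x) x 1 := by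
        simpa using (hasDerivAt_id (1 : ℝ)).smul_const x
      exact hd.comp_hasDerivAt (1 : ℝ) hl
    exact hW2.unique hW1

/-! ### The bi-harmonic extension -/

/-- A continuous function on the unit sphere is the restriction of a continuous function on
`ℝ^n` (Tietze), and its absolute value is bounded there by its supremum. -/
lemma exists_extension {n : ℕ} {k : EuclideanSpace ℝ (Fin n) → ℝ}
    (hk : ContinuousOn k (Metric.sphere (0 : EuclideanSpace ℝ (Fin n)) 1)) :
    ∃ k' : EuclideanSpace ℝ (Fin n) → ℝ, Continuous k' ∧ (∀ y, ‖y‖ = 1 → k' y = k y) ∧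
      ∀ y, ‖y‖ = 1 →
        |k' y| ≤ sSup ((fun y => |k y|) '' Metric.sphere (0 : EuclideanSpace ℝ (Fin n)) 1) := by
  obtain ⟨g, hg⟩ := ContinuousMap.exists_restrict_eq (Metric.isClosed_sphere
    (x := (0 : EuclideanSpace ℝ (Fin n))) (ε := 1)) ⟨_, hk.domRestrict⟩
  have hgk : ∀ y, ‖y‖ = 1 → g y = k y := fun y hy =>
    DFunLike.congr_fun hg (⟨y, mem_sphere_zero_iff_norm.2 hy⟩ :
      Metric.sphere (0 : EuclideanSpace ℝ (Fin n)) 1)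
  refine ⟨g, g.continuous, hgk, fun y hy => ?_⟩
  rw [hgk y hy]
  exact le_csSup ((isCompact_sphere _ _).image_of_continuousOn hk.abs).bddAbove
    (mem_image_of_mem _ (mem_sphere_zero_iff_norm.2 hy))

lemma sSup_abs_nonneg {n : ℕ} (k : EuclideanSpace ℝ (Fin n) → ℝ) :
    0 ≤ sSup ((fun y => |k y|) '' Metric.sphere (0 : EuclideanSpace ℝ (Fin n)) 1) :=
  Real.sSup_nonneg (by rintro _ ⟨y, -, rfl⟩; exact abs_nonneg _)

/-- Exterior bi-harmonic extension with decay: for `n ≥ 5` there is a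
constant `c > 0` depending only on `n` such that for all continuous `h, k` on the unit
sphere of `ℝ^n` there is a function `u`, continuous on `{‖x‖ ≥ 1}` and smooth on
`{‖x‖ > 1}`, with `Δ²u = 0` on `{‖x‖ > 1}`, `u = h` on the sphere, `Δu` extending
continuously to `{‖x‖ ≥ 1}` (as a function `v`) with boundary values `k`, and
`‖x‖^(n-4) |u(x)| + ‖x‖^(n-2) |Δu(x)| ≤ c (sup |h| + sup |k|)` for `‖x‖ ≥ 1`;
in particular `u(x) = O(‖x‖^(4-n))` at infinity. -/
theorem statement13 (n : ℕ) (hn : 5 ≤ n) :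
    ∃ c : ℝ, 0 < c ∧
      ∀ h k : EuclideanSpace ℝ (Fin n) → ℝ,
        ContinuousOn h (Metric.sphere (0 : EuclideanSpace ℝ (Fin n)) 1) →
        ContinuousOn k (Metric.sphere (0 : EuclideanSpace ℝ (Fin n)) 1) →
        ∃ u v : EuclideanSpace ℝ (Fin n) → ℝ,
          ContinuousOn u {x : EuclideanSpace ℝ (Fin n) | 1 ≤ ‖x‖} ∧
          ContDiffOn ℝ (⊤ : ℕ∞) u {x : EuclideanSpace ℝ (Fin n) | 1 < ‖x‖} ∧
          (∀ x : EuclideanSpace ℝ (Fin n), 1 < ‖x‖ →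
            laplacian (laplacian u) x = 0) ∧
          (∀ x : EuclideanSpace ℝ (Fin n), ‖x‖ = 1 → u x = h x) ∧
          ContinuousOn v {x : EuclideanSpace ℝ (Fin n) | 1 ≤ ‖x‖} ∧
          (∀ x : EuclideanSpace ℝ (Fin n), 1 < ‖x‖ → v x = laplacian u x) ∧
          (∀ x : EuclideanSpace ℝ (Fin n), ‖x‖ = 1 → v x = k x) ∧
          (∀ x : EuclideanSpace ℝ (Fin n), 1 ≤ ‖x‖ →
            ‖x‖ ^ ((n : ℝ) - 4) * |u x| + ‖x‖ ^ ((n : ℝ) - 2) * |v x| ≤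
              c * (sSup ((fun y => |h y|) ''
                      Metric.sphere (0 : EuclideanSpace ℝ (Fin n)) 1)
                  + sSup ((fun y => |k y|) ''
                      Metric.sphere (0 : EuclideanSpace ℝ (Fin n)) 1))) := by
  obtain ⟨σ, hσ, h0, h1, hinv⟩ := exists_sphereMeasure n (by omega)
  obtain ⟨a, ha, hmass⟩ := exists_mass hn h0 h1 hinv
  refine ⟨2, two_pos, fun h k hh hk => ?_⟩
  obtain ⟨h', hh'c, hh', hh'b⟩ := exists_extension hh
  obtain ⟨k', hk'c, hk', hk'b⟩ := exists_extension hk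
  have hSh := sSup_abs_nonneg h
  have hSk := sSup_abs_nonneg k
  set Sh := sSup ((fun y => |h y|) '' Metric.sphere (0 : EuclideanSpace ℝ (Fin n)) 1)
  set Sk := sSup ((fun y => |k y|) '' Metric.sphere (0 : EuclideanSpace ℝ (Fin n)) 1)
  obtain ⟨H, hH1, -, hHb, hHc, hHs, hHl⟩ := exists_poissonExt h1 ha hmass hh'c hSh hh'b
  obtain ⟨v, hv1, hvrep, hvb, hvc, hvs, hvl⟩ := exists_poissonExt h1 ha hmass hk'c hSk hk'b
  obtain ⟨W, hWc, hWb, hWs, hWl, hWe⟩ :=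
    exists_eulerSolution hn h1 hk'c hSk hk'b hvrep hvb hvc
  have h2le : (2 : WithTop ℕ∞) ≤ ((⊤ : ℕ∞) : WithTop ℕ∞) :=
    show ((2 : ℕ∞) : WithTop ℕ∞) ≤ _ from WithTop.coe_le_coe.2 le_top
  have hq : ContDiff ℝ (⊤ : ℕ∞) (fun y : EuclideanSpace ℝ (Fin n) => ‖y‖ ^ 2 - 1) :=
    (contDiff_norm_sq ℝ).sub contDiff_const
  have hqW : ∀ x, 1 < ‖x‖ → ContDiffAt ℝ (⊤ : ℕ∞) (fun y => (‖y‖ ^ 2 - 1) * W y) x :=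
    fun x hx => hq.contDiffAt.mul (hWs x hx)
  have hlap : ∀ x, 1 < ‖x‖ → laplacian (fun y => (‖y‖ ^ 2 - 1) * W y + H y) x = v x := by
    intro x hx
    rw [laplacian_add ((hqW x hx).of_le h2le) ((hHs x hx).of_le h2le), hHl x hx,
      laplacian_quadratic_mul ((hWs x hx).of_le h2le), hWl x hx, hWe x hx]
    ring
  refine ⟨fun x => (‖x‖ ^ 2 - 1) * W x + H x, v, ?_, ?_, ?_, ?_, hvc, ?_, ?_, ?_⟩
  · exact (hq.continuous.continuousOn.mul hWc).add hHc
  · exact fun x hx => ((hqW x hx).add (hHs x hx)).contDiffWithinAt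
  · intro x hx
    rw [← hvl x hx]
    refine laplacian_congr ?_
    filter_upwards [eventually_one_lt_norm hx] with y hy using hlap y hy
  · intro x hx
    simp only [hx]
    rw [hH1 x hx, hh' x hx]; ring
  · exact fun x hx => (hlap x hx).symm
  · exact fun x hx => (hv1 x hx).trans (hk' x hx)
  · intro x hx
    have hx0 : 0 < ‖x‖ := by linarith
    set q : ℝ := ‖x‖ ^ (2 - (n : ℝ)) with hqdef
    have e1 : ‖x‖ ^ ((n : ℝ) - 2) * q = 1 := by
      rw [hqdef, ← Real.rpow_add hx0]; norm_num
    have e2 : ‖x‖ ^ ((n : ℝ) - 4) * (‖x‖ ^ 2 * q) = 1 := by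
      rw [hqdef, ← Real.rpow_natCast ‖x‖ 2, ← Real.rpow_add hx0, ← Real.rpow_add hx0]
      rw [show (n : ℝ) - 4 + (((2 : ℕ) : ℝ) + (2 - (n : ℝ))) = 0 by push_cast; ring,
        Real.rpow_zero]
    have hq0 : 0 ≤ q := by positivity
    have hx2 : 1 ≤ ‖x‖ ^ 2 := one_le_pow₀ hx
    have b1 : ‖x‖ ^ ((n : ℝ) - 2) * |v x| ≤ Sk := by
      calc ‖x‖ ^ ((n : ℝ) - 2) * |v x| ≤ ‖x‖ ^ ((n : ℝ) - 2) * (Sk * q) := by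
            gcongr; exact hvb x hx
        _ = Sk * (‖x‖ ^ ((n : ℝ) - 2) * q) := by ring
        _ = Sk := by rw [e1, mul_one]
    have b2 : |(‖x‖ ^ 2 - 1) * W x + H x| ≤ (Sk / 2 + Sh) * (‖x‖ ^ 2 * q) := by
      refine (abs_add_le _ _).trans ?_
      rw [abs_mul, abs_of_nonneg (by linarith : 0 ≤ ‖x‖ ^ 2 - 1)]
      have c1 : (‖x‖ ^ 2 - 1) * |W x| ≤ ‖x‖ ^ 2 * (Sk / 2 * q) :=
        mul_le_mul (by linarith) (hWb x hx) (abs_nonneg _) (by positivity)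
      have c2 : |H x| ≤ ‖x‖ ^ 2 * (Sh * q) :=
        (hHb x hx).trans (le_mul_of_one_le_left (by positivity) hx2)
      linarith
    have b3 : ‖x‖ ^ ((n : ℝ) - 4) * |(‖x‖ ^ 2 - 1) * W x + H x| ≤ Sk / 2 + Sh := by
      calc _ ≤ ‖x‖ ^ ((n : ℝ) - 4) * ((Sk / 2 + Sh) * (‖x‖ ^ 2 * q)) := by gcongr
        _ = (Sk / 2 + Sh) * (‖x‖ ^ ((n : ℝ) - 4) * (‖x‖ ^ 2 * q)) := by ring
        _ = Sk / 2 + Sh := by rw [e2, mul_one]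
    change ‖x‖ ^ ((n : ℝ) - 4) * |(‖x‖ ^ 2 - 1) * W x + H x| + _ ≤ _
    linarith
end
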